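/- arXiv:0803.0923 — 4 statements merged into one kernel-verified Lean document; each statement's English description precedes it below -/
import Mathlib

section
/- Let Q₃ : ℝ^{3×3} → [0,∞) be a nonnegative quadratic form with Q₃(G) = Q₃((G + Gᵀ)/2) for all G and which is positive definite on symmetric matrices, let R₀ ∈ SO(3), and let D ⊂ ℝ² be the open disc of radius 1/√π centred at the origin. Then for every skew-symmetric matrix P ∈ ℝ^{3×3}, with entries p₁₂ = P₁₂, p₁₃ = P₁₃, p₂₃ = P₂₃, the infimum over all C¹ maps α : ℝ² → ℝ³ of ∫_D Q₃( R₀ ( P(0,ξ,ζ)ᵀ | ∂_ξα | ∂_ζα ) R₀ᵀ ) dξdζ equals (1/(4π)) · min over u, v, w ∈ ℝ³ of [ Q₃( R₀ ( (p₁₂, 0, −p₂₃)ᵀ | u | v ) R₀ᵀ ) + Q₃( R₀ ( (p₁₃, p₂₃, 0)ᵀ | v | w ) R₀ᵀ ) ], and this minimum is attained. -/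
open MeasureTheory Set

noncomputable section

abbrev M3 : Type := Matrix (Fin 3) (Fin 3) ℝ

/-- The special orthogonal group `SO(3)` as a set of `3 × 3` real matrices. -/
def SO3 : Set M3 := {R : M3 | R.transpose * R = 1 ∧ R.det = 1}

/-- The Frobenius norm of a `3 × 3` real matrix. -/
def frob3 (F : M3) : ℝ := Real.sqrt (∑ i, ∑ j, (F i j) ^ 2)

/-- The Frobenius distance from a matrix to `SO(3)`. -/
def distSO3 (F : M3) : ℝ := sInf ((fun R => frob3 (F - R)) '' SO3)

/-- The Euclidean norm on `ℝ³`. -/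
def enorm3 (v : Fin 3 → ℝ) : ℝ := Real.sqrt (∑ i, (v i) ^ 2)

/-- The `3 × 3` matrix with the three given columns. -/
def colMat (a b c : Fin 3 → ℝ) : M3 :=
  Matrix.of fun i j => if j = 0 then a i else if j = 1 then b i else c i

/-- `a ⊗ e₁` : the `3 × 3` matrix whose first column is `a` and whose other columns vanish. -/
def tensE1 (a : Fin 3 → ℝ) : M3 := Matrix.of fun i j => if j = 0 then a i else 0

/-- The normal vector `ν₂(s) = R₀(s) e₂`. -/
def nu2 (R₀ : ℝ → M3) (s : ℝ) : Fin 3 → ℝ := (R₀ s).mulVec (Pi.single 1 1)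

/-- The normal vector `ν₃(s) = R₀(s) e₃`. -/
def nu3 (R₀ : ℝ → M3) (s : ℝ) : Fin 3 → ℝ := (R₀ s).mulVec (Pi.single 2 1)

/-- The parametrization `Ψ⁽ʰ⁾(s,ξ,ζ) = γ(s) + hξν₂(s) + hζν₃(s)` of the thin beam. -/
def Psih (γ : ℝ → Fin 3 → ℝ) (R₀ : ℝ → M3) (h : ℝ) (p : ℝ × ℝ × ℝ) : Fin 3 → ℝ :=
  γ p.1 + (h * p.2.1) • nu2 R₀ p.1 + (h * p.2.2) • nu3 R₀ p.1

/-- The scaled gradient `∇_h z = (∂_s z | h⁻¹ ∂_ξ z | h⁻¹ ∂_ζ z)` as a `3 × 3` matrix. -/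
def scaledGrad (h : ℝ) (z : ℝ × ℝ × ℝ → Fin 3 → ℝ) (p : ℝ × ℝ × ℝ) : M3 :=
  Matrix.of fun i j =>
    if j = 0 then deriv (fun t => z (t, p.2.1, p.2.2) i) p.1
    else if j = 1 then h⁻¹ * deriv (fun t => z (p.1, t, p.2.2) i) p.2.1
    else h⁻¹ * deriv (fun t => z (p.1, p.2.1, t) i) p.2.2

/-- The open disc of area one centred at the origin of `ℝ²`. -/
def unitDisc : Set (ℝ × ℝ) := {p : ℝ × ℝ | p.1 ^ 2 + p.2 ^ 2 < 1 / Real.pi}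

/-!
Every `C¹` map is `α = q + β`, where `q` is the quadratic map with second derivatives `u, v, w`
solving the Euler–Lagrange system of the finite-dimensional problem. Along `q` the integrand is a
quadratic form in `(ξ, ζ)`, and its integral over the disc is, up to a constant, the sum of its two
diagonal coefficients. The Euler–Lagrange system makes the term linear in `β` equal to the
angular derivative `-ζ ∂_ξ + ξ ∂_ζ` of a linear image of `β`, which integrates to zero over the
disc, and the term quadratic in `β` is nonnegative.
-/

section QuadraticForm

open QuadraticMap

lemma continuous_quadraticForm {E : Type*} [NormedAddCommGroup E] [NormedSpace ℝ E]
    [FiniteDimensional ℝ E] (Q : QuadraticForm ℝ E) : Continuous Q := by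
  have hQ (x : E) : Q x = 2⁻¹ * Q.polarBilin.toContinuousBilinearMap x x := by
    simp [polar_self]
  simp only [funext hQ]
  fun_prop

lemma quadraticForm_smul_add_smul {R W : Type*} [CommRing R] [AddCommGroup W] [Module R W]
    (Q : QuadraticForm R W) (s t : R) (x y : W) :
    Q (s • x + t • y) = s ^ 2 * Q x + s * t * polar Q x y + t ^ 2 * Q y := by
  simp only [QuadraticMap.map_add, QuadraticMap.map_smul, polar_smul_left, polar_smul_right,
    smul_eq_mul]
  ring

variable {𝕜 W : Type*} [Field 𝕜] [LinearOrder 𝕜] [IsStrictOrderedRing 𝕜] [AddCommGroup W]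
  [Module 𝕜 W] {Q : QuadraticForm 𝕜 W} (hQ : ∀ x, 0 ≤ Q x)
include hQ

lemma add_polar_le_quadraticForm_add (x y : W) : Q x + polar Q x y ≤ Q (x + y) := by
  rw [QuadraticMap.map_add Q x y]
  linarith [hQ y]

lemma polar_eq_zero_of_nonneg_of_eq_zero {x : W} (hx : Q x = 0) (y : W) : polar Q x y = 0 := by
  have hx' : Q.polarBilin x x = 0 := by simp [polar_self, hx]
  have hker : x ∈ LinearMap.ker Q.polarBilin :=
    (LinearMap.BilinForm.apply_apply_same_eq_zero_iff Q.polarBilin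
      (fun z ↦ by simp [polar_self, hQ z]) ⟨fun _ _ ↦ polar_comm _ _ _⟩).1 hx'
  exact LinearMap.congr_fun hker y

lemma exists_forall_polar_add_map_eq_zero {E : Type*} [AddCommGroup E] [Module 𝕜 E]
    [FiniteDimensional 𝕜 E] (S : E →ₗ[𝕜] W) (c : W) :
    ∃ x, ∀ y, polar Q (c + S x) (S y) = 0 := by
  let K : E →ₗ[𝕜] Module.Dual 𝕜 E := Q.polarBilin.compl₁₂ S S
  let L : Module.Dual 𝕜 E := (Q.polarBilin c).comp S
  -- The range of the symmetric map `K` is the annihilator of its kernel.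
  have hL : -L ∈ LinearMap.range K := by
    rw [← Subspace.dualCoannihilator_dualAnnihilator_eq (W := LinearMap.range K),
      LinearMap.dualCoannihilator_range_eq_ker_flip, Submodule.mem_dualAnnihilator]
    intro y hy
    have hSy : polar Q (S y) (S y) = 0 := LinearMap.congr_fun hy y
    rw [polar_self, smul_eq_zero] at hSy
    have hcy : polar Q (S y) c = 0 :=
      polar_eq_zero_of_nonneg_of_eq_zero hQ (hSy.resolve_left two_ne_zero) c
    simpa [L, polar_comm Q c] using hcy
  obtain ⟨x, hx⟩ := hL
  refine ⟨x, fun y ↦ ?_⟩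
  have hxy : polar Q (S x) (S y) = -polar Q c (S y) := LinearMap.congr_fun hx y
  rw [polar_add_left, hxy, add_neg_cancel]

end QuadraticForm

section CriticalPair

open QuadraticMap

variable {𝕜 V : Type*} [Field 𝕜] [AddCommGroup V] [Module 𝕜 V] {Q : QuadraticForm 𝕜 (V × V × V)}

/-- The Euler–Lagrange equations expressing that `(u, v, w)` is a critical point of
`Q (a₁, u, v) + Q (a₂, v, w)`, stated for the triples `F₁ = (a₁, u, v)` and `F₂ = (a₂, v, w)`. -/
def IsCriticalPair (Q : QuadraticForm 𝕜 (V × V × V)) (F₁ F₂ : V × V × V) : Prop :=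
  ∀ x y z : V, polar Q F₁ (0, x, y) + polar Q F₂ (0, y, z) = 0

variable [LinearOrder 𝕜] [IsStrictOrderedRing 𝕜]

lemma exists_isCriticalPair [FiniteDimensional 𝕜 V] (hQ : ∀ G, 0 ≤ Q G) (a₁ a₂ : V) :
    ∃ u v w : V, IsCriticalPair Q (a₁, u, v) (a₂, v, w) := by
  let S : V × V × V →ₗ[𝕜] (V × V × V) × (V × V × V) :=
    { toFun := fun G ↦ ((0, G.1, G.2.1), (0, G.2.1, G.2.2))
      map_add' := by simp
      map_smul' := by simp }
  have hQQ (x : (V × V × V) × (V × V × V)) : 0 ≤ Q.prod Q x := add_nonneg (hQ _) (hQ _)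
  obtain ⟨⟨u, v, w⟩, huvw⟩ :=
    exists_forall_polar_add_map_eq_zero hQQ S ((a₁, 0, 0), (a₂, 0, 0))
  refine ⟨u, v, w, fun x y z ↦ ?_⟩
  simpa [S] using huvw (x, y, z)

lemma IsCriticalPair.add_le_add (hQ : ∀ G, 0 ≤ Q G) {a₁ a₂ u v w : V}
    (huvw : IsCriticalPair Q (a₁, u, v) (a₂, v, w)) (u' v' w' : V) :
    Q (a₁, u, v) + Q (a₂, v, w) ≤ Q (a₁, u', v') + Q (a₂, v', w') := by
  have h₁ := add_polar_le_quadraticForm_add hQ (a₁, u, v) (0, u' - u, v' - v)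
  have h₂ := add_polar_le_quadraticForm_add hQ (a₂, v, w) (0, v' - v, w' - w)
  simp only [Prod.mk_add_mk, add_zero, add_sub_cancel] at h₁ h₂
  linarith [huvw (u' - u) (v' - v) (w' - w)]

end CriticalPair

section Disc

open Real

/-- The open disc in `ℝ²` centred at the origin, indexed by the square `c` of its radius; it is
empty for `c ≤ 0`. -/
def openDisc (c : ℝ) : Set (ℝ × ℝ) := {p | p.1 ^ 2 + p.2 ^ 2 < c}

lemma isOpen_openDisc (c : ℝ) : IsOpen (openDisc c) :=
  isOpen_lt (by fun_prop) continuous_const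

lemma openDisc_subset_closedBall (c : ℝ) : openDisc c ⊆ Metric.closedBall 0 √c := by
  intro p (hp : p.1 ^ 2 + p.2 ^ 2 < c)
  rw [mem_closedBall_zero_iff, Prod.norm_def, max_le_iff]
  exact ⟨abs_le_sqrt (by nlinarith), abs_le_sqrt (by nlinarith)⟩

lemma polarCoord_symm_mem_openDisc_iff {c : ℝ} {q : ℝ × ℝ} (hq : q ∈ polarCoord.target) :
    polarCoord.symm q ∈ openDisc c ↔ q.1 < √c := by
  have hq₁ : 0 < q.1 := hq.1
  have hsq : (q.1 * cos q.2) ^ 2 + (q.1 * sin q.2) ^ 2 = q.1 ^ 2 := by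
    linear_combination q.1 ^ 2 * sin_sq_add_cos_sq q.2
  rw [lt_sqrt hq₁.le, ← hsq]
  rfl

lemma polarCoord_target_inter_preimage_openDisc (c : ℝ) :
    polarCoord.target ∩ polarCoord.symm ⁻¹' openDisc c = Ioo 0 √c ×ˢ Ioo (-π) π := by
  ext q
  constructor
  · rintro ⟨hq, hqc⟩
    exact ⟨⟨hq.1, (polarCoord_symm_mem_openDisc_iff hq).1 hqc⟩, hq.2⟩
  · rintro ⟨⟨hq₀, hqc⟩, hθ⟩
    have hq : q ∈ polarCoord.target := ⟨hq₀, hθ⟩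
    exact ⟨hq, (polarCoord_symm_mem_openDisc_iff hq).2 hqc⟩

variable {E : Type*} [NormedAddCommGroup E]

lemma integrableOn_openDisc_of_continuous (c : ℝ) {g : ℝ × ℝ → E} (hg : Continuous g) :
    IntegrableOn g (openDisc c) :=
  (hg.locallyIntegrable.integrableOn_isCompact (isCompact_closedBall 0 √c)).mono_set
    (openDisc_subset_closedBall c)

variable [NormedSpace ℝ E]

lemma setIntegral_openDisc_eq_polar (c : ℝ) {g : ℝ × ℝ → E} (hg : Continuous g) :
    ∫ p in openDisc c, g p =
      ∫ r in 0..√c, r • ∫ θ in -π..π, g (r * cos θ, r * sin θ) := by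
  have hint : IntegrableOn (fun q : ℝ × ℝ ↦ q.1 • g (polarCoord.symm q))
      (Ioo 0 √c ×ˢ Ioo (-π) π) := by
    refine (Continuous.locallyIntegrable ?_).integrableOn_isCompact
      (isCompact_Icc.prod isCompact_Icc) |>.mono_set
      (prod_mono Ioo_subset_Icc_self Ioo_subset_Icc_self)
    simp only [polarCoord_symm_apply]
    fun_prop
  have hind (q : ℝ × ℝ) : q.1 • (openDisc c).indicator g (polarCoord.symm q) =
      (polarCoord.symm ⁻¹' openDisc c).indicator (fun q ↦ q.1 • g (polarCoord.symm q)) q := by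
    rw [indicator_smul_apply]
    rfl
  have hmeas : MeasurableSet (polarCoord.symm ⁻¹' openDisc c) :=
    ((isOpen_openDisc c).preimage continuous_polarCoord_symm).measurableSet
  rw [← integral_indicator (isOpen_openDisc c).measurableSet, ← integral_comp_polarCoord_symm]
  simp only [hind]
  rw [setIntegral_indicator hmeas, polarCoord_target_inter_preimage_openDisc,
    Measure.volume_eq_prod, setIntegral_prod _ hint,
    intervalIntegral.integral_of_le (sqrt_nonneg c), integral_Ioc_eq_integral_Ioo]
  refine setIntegral_congr_fun measurableSet_Ioo fun r _ ↦ ?_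
  rw [intervalIntegral.integral_of_le (by linarith [pi_pos]), integral_Ioc_eq_integral_Ioo,
    ← integral_smul]
  rfl

lemma setIntegral_openDisc_fderiv_rotation_eq_zero [CompleteSpace E] (c : ℝ) {f : ℝ × ℝ → E}
    (hf : ContDiff ℝ 1 f) : ∫ p in openDisc c, fderiv ℝ f p (-p.2, p.1) = 0 := by
  have hcont : Continuous fun p : ℝ × ℝ ↦ fderiv ℝ f p (-p.2, p.1) :=
    (hf.continuous_fderiv one_ne_zero).clm_apply (by fun_prop)
  have hcircle (r : ℝ) :
      ∫ θ in -π..π, fderiv ℝ f (r * cos θ, r * sin θ) (-(r * sin θ), r * cos θ) = 0 := by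
    have hderiv (θ : ℝ) : HasDerivAt (fun θ ↦ f (r * cos θ, r * sin θ))
        (fderiv ℝ f (r * cos θ, r * sin θ) (-(r * sin θ), r * cos θ)) θ := by
      refine (hf.differentiable one_ne_zero _).hasFDerivAt.comp_hasDerivAt θ ?_
      simpa using ((hasDerivAt_cos θ).const_mul r).prodMk ((hasDerivAt_sin θ).const_mul r)
    rw [intervalIntegral.integral_eq_sub_of_hasDerivAt (fun θ _ ↦ hderiv θ)]
    · simp
    · exact (hcont.comp (g := fun p : ℝ × ℝ ↦ fderiv ℝ f p (-p.2, p.1))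
        (f := fun θ : ℝ ↦ (r * cos θ, r * sin θ)) (by fun_prop)).intervalIntegrable _ _
  simp [setIntegral_openDisc_eq_polar c hcont, hcircle]

lemma integral_quadraticForm_cos_sin {W : Type*} [AddCommGroup W] [Module ℝ W]
    (Q : QuadraticForm ℝ W) (x y : W) :
    ∫ θ in -π..π, Q (cos θ • x + sin θ • y) = π * (Q x + Q y) := by
  simp only [quadraticForm_smul_add_smul, mul_comm (cos _) (sin _)]
  rw [intervalIntegral.integral_add, intervalIntegral.integral_add]
  · simp only [intervalIntegral.integral_mul_const, integral_cos_sq, integral_sin_mul_cos₁,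
      integral_sin_sq, cos_neg, sin_neg, cos_pi, sin_pi]
    ring
  all_goals exact Continuous.intervalIntegrable (by fun_prop) _ _

lemma setIntegral_openDisc_quadraticForm {W : Type*} [AddCommGroup W] [Module ℝ W] {c : ℝ}
    (hc : 0 ≤ c) (Q : QuadraticForm ℝ W) (x y : W) :
    ∫ p in openDisc c, Q (p.1 • x + p.2 • y) = π * c ^ 2 / 4 * (Q x + Q y) := by
  have hcont : Continuous fun p : ℝ × ℝ ↦ Q (p.1 • x + p.2 • y) := by
    simp only [quadraticForm_smul_add_smul]
    fun_prop
  have hradial (r θ : ℝ) : Q ((r * cos θ) • x + (r * sin θ) • y) =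
      r ^ 2 * Q (cos θ • x + sin θ • y) := by
    simp only [mul_smul, ← smul_add, QuadraticMap.map_smul, smul_eq_mul, sq]
  have hsqrt : √c ^ 4 = c ^ 2 := by rw [show 4 = 2 * 2 from rfl, pow_mul, sq_sqrt hc]
  calc ∫ p in openDisc c, Q (p.1 • x + p.2 • y)
      = ∫ r in 0..√c, r ^ 3 * (π * (Q x + Q y)) := by
        simp only [setIntegral_openDisc_eq_polar c hcont, hradial,
          intervalIntegral.integral_const_mul, integral_quadraticForm_cos_sin, smul_eq_mul,
          ← mul_assoc, ← pow_succ']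
    _ = π * c ^ 2 / 4 * (Q x + Q y) := by
        rw [intervalIntegral.integral_mul_const, integral_pow]
        norm_num [hsqrt]
        ring

end Disc

section Strain

open QuadraticMap

variable {V : Type*} [NormedAddCommGroup V] [NormedSpace ℝ V]

/-- The columns `(ξ a₁ + ζ a₂ | ∂_ξ α | ∂_ζ α)` at the point `p = (ξ, ζ)`, to which the energy
density is applied. A matrix is encoded by the triple of its columns, which may lie in any normed
space. -/
def strain (a₁ a₂ : V) (α : ℝ × ℝ → V) (p : ℝ × ℝ) : V × V × V :=
  (p.1 • a₁ + p.2 • a₂, deriv (fun x ↦ α (x, p.2)) p.1, deriv (fun y ↦ α (p.1, y)) p.2)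

/-- The homogeneous quadratic map `ℝ² → V` with second derivatives `∂_ξξ = u`, `∂_ξζ = v` and
`∂_ζζ = w`; the minimiser of the energy is of this form. -/
def quadMap (u v w : V) (p : ℝ × ℝ) : V :=
  (p.1 ^ 2 / 2) • u + (p.1 * p.2) • v + (p.2 ^ 2 / 2) • w

lemma contDiff_quadMap {n : WithTop ℕ∞} (u v w : V) : ContDiff ℝ n (quadMap u v w) := by
  unfold quadMap
  fun_prop

lemma strain_eq_fderiv (a₁ a₂ : V) {α : ℝ × ℝ → V} {p : ℝ × ℝ} (hα : DifferentiableAt ℝ α p) :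
    strain a₁ a₂ α p = (p.1 • a₁ + p.2 • a₂, fderiv ℝ α p (1, 0), fderiv ℝ α p (0, 1)) := by
  have hξ : HasDerivAt (fun x ↦ α (x, p.2)) (fderiv ℝ α p (1, 0)) p.1 :=
    HasFDerivAt.comp_hasDerivAt (f := fun x ↦ (x, p.2)) p.1 hα.hasFDerivAt
      ((hasDerivAt_id _).prodMk (hasDerivAt_const _ _))
  have hζ : HasDerivAt (fun y ↦ α (p.1, y)) (fderiv ℝ α p (0, 1)) p.2 :=
    HasFDerivAt.comp_hasDerivAt (f := fun y ↦ (p.1, y)) p.2 hα.hasFDerivAt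
      ((hasDerivAt_const _ _).prodMk (hasDerivAt_id _))
  rw [strain, hξ.deriv, hζ.deriv]

lemma continuous_strain (a₁ a₂ : V) {α : ℝ × ℝ → V} (hα : ContDiff ℝ 1 α) :
    Continuous (strain a₁ a₂ α) := by
  have hfderiv : Continuous (fderiv ℝ α) := hα.continuous_fderiv one_ne_zero
  simp only [funext fun p ↦ strain_eq_fderiv a₁ a₂ (hα.differentiable one_ne_zero p)]
  exact .prodMk (by fun_prop) ((hfderiv.clm_apply continuous_const).prodMk
    (hfderiv.clm_apply continuous_const))

lemma strain_add (a₁ a₂ b₁ b₂ : V) {α β : ℝ × ℝ → V} {p : ℝ × ℝ} (hα : DifferentiableAt ℝ α p)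
    (hβ : DifferentiableAt ℝ β p) :
    strain (a₁ + b₁) (a₂ + b₂) (α + β) p = strain a₁ a₂ α p + strain b₁ b₂ β p := by
  rw [strain_eq_fderiv _ _ hα, strain_eq_fderiv _ _ hβ, strain_eq_fderiv _ _ (hα.add hβ),
    fderiv_add hα hβ]
  simp only [_root_.add_apply, Prod.mk_add_mk, smul_add, add_add_add_comm]

lemma strain_quadMap (a₁ a₂ u v w : V) (p : ℝ × ℝ) :
    strain a₁ a₂ (quadMap u v w) p = p.1 • (a₁, u, v) + p.2 • (a₂, v, w) := by
  have hsq (t : ℝ) : HasDerivAt (fun x : ℝ ↦ x ^ 2 / 2) t t := by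
    simpa using (hasDerivAt_pow 2 t).div_const 2
  have hξ : HasDerivAt (fun x ↦ quadMap u v w (x, p.2)) (p.1 • u + p.2 • v) p.1 := by
    simpa [quadMap] using (((hsq p.1).smul_const u).fun_add
      (((hasDerivAt_id p.1).mul_const p.2).smul_const v)).add_const ((p.2 ^ 2 / 2) • w)
  have hζ : HasDerivAt (fun y ↦ quadMap u v w (p.1, y)) (p.1 • v + p.2 • w) p.2 := by
    simpa [quadMap] using ((((hasDerivAt_id p.2).const_mul p.1).smul_const v).const_add
      ((p.1 ^ 2 / 2) • u)).fun_add ((hsq p.2).smul_const w)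
  rw [strain, hξ.deriv, hζ.deriv]
  rfl

variable {Q : QuadraticForm ℝ (V × V × V)}

lemma polar_strain_eq_rotation {F₁ F₂ : V × V × V}
    (hF : IsCriticalPair Q F₁ F₂) {β : ℝ × ℝ → V} {p : ℝ × ℝ} (hβ : DifferentiableAt ℝ β p) :
    polar Q (p.1 • F₁ + p.2 • F₂) (strain 0 0 β p) =
      polar Q F₁ (0, 0, fderiv ℝ β p (-p.2, p.1)) := by
  have hrotation : fderiv ℝ β p (-p.2, p.1) =
      -p.2 • fderiv ℝ β p (1, 0) + p.1 • fderiv ℝ β p (0, 1) := by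
    rw [← map_smul, ← map_smul, ← map_add]
    simp
  have hcombine (s t : ℝ) (x y : V) :
      ((0, 0, s • x + t • y) : V × V × V) = s • (0, 0, x) + t • (0, 0, y) := by simp
  rw [strain_eq_fderiv 0 0 hβ, hrotation, hcombine]
  generalize fderiv ℝ β p (1, 0) = x
  generalize fderiv ℝ β p (0, 1) = y
  have hsplit (F : V × V × V) :
      polar Q F (0, x, y) = polar Q F (0, x, 0) + polar Q F (0, 0, y) := by
    simp [← polar_add_right]
  have hzero (F : V × V × V) : polar Q F (0, 0, 0) = 0 := polar_zero_right Q F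
  have hξξ : polar Q F₁ (0, x, 0) = 0 := by simpa [hzero] using hF x 0 0
  have hζζ : polar Q F₂ (0, 0, y) = 0 := by simpa [hzero] using hF 0 0 y
  have hξζ : polar Q F₁ (0, 0, x) + polar Q F₂ (0, x, 0) = 0 := hF 0 x 0
  simp only [smul_zero, add_zero, polar_add_left, polar_add_right, polar_smul_left,
    polar_smul_right, smul_eq_mul, hsplit, hξξ, hζζ]
  linear_combination p.2 * hξζ

variable [FiniteDimensional ℝ V]

lemma setIntegral_openDisc_polar_strain_eq_zero (c : ℝ) {F₁ F₂ : V × V × V}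
    (hF : IsCriticalPair Q F₁ F₂) {β : ℝ × ℝ → V} (hβ : ContDiff ℝ 1 β) :
    ∫ p in openDisc c, polar Q (p.1 • F₁ + p.2 • F₂) (strain 0 0 β p) = 0 := by
  have : CompleteSpace V := FiniteDimensional.complete ℝ V
  let τ : V →L[ℝ] ℝ := LinearMap.toContinuousLinearMap
    ((Q.polarBilin F₁).comp (LinearMap.inr ℝ V (V × V) ∘ₗ LinearMap.inr ℝ V V))
  have hτ (p : ℝ × ℝ) : polar Q (p.1 • F₁ + p.2 • F₂) (strain 0 0 β p) =
      τ (fderiv ℝ β p (-p.2, p.1)) :=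
    polar_strain_eq_rotation hF (hβ.differentiable one_ne_zero p)
  have hint : IntegrableOn (fun p : ℝ × ℝ ↦ fderiv ℝ β p (-p.2, p.1)) (openDisc c) :=
    integrableOn_openDisc_of_continuous c
      ((hβ.continuous_fderiv one_ne_zero).clm_apply (by fun_prop))
  simp only [hτ]
  rw [τ.integral_comp_comm hint, setIntegral_openDisc_fderiv_rotation_eq_zero c hβ, map_zero]

lemma setIntegral_openDisc_le_setIntegral_strain (hQ : ∀ G, 0 ≤ Q G) (c : ℝ) {a₁ a₂ u v w : V}
    (huvw : IsCriticalPair Q (a₁, u, v) (a₂, v, w)) {α : ℝ × ℝ → V} (hα : ContDiff ℝ 1 α) :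
    ∫ p in openDisc c, Q (p.1 • (a₁, u, v) + p.2 • (a₂, v, w)) ≤
      ∫ p in openDisc c, Q (strain a₁ a₂ α p) := by
  have hq : ContDiff ℝ 1 (quadMap u v w) := contDiff_quadMap u v w
  have hβ : ContDiff ℝ 1 (α - quadMap u v w) := hα.sub hq
  have hdecomp (p : ℝ × ℝ) : strain a₁ a₂ α p =
      p.1 • (a₁, u, v) + p.2 • (a₂, v, w) + strain 0 0 (α - quadMap u v w) p := by
    rw [← strain_quadMap, ← strain_add _ _ _ _ (hq.differentiable one_ne_zero p)
      (hβ.differentiable one_ne_zero p), add_zero, add_zero, add_sub_cancel]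
  have hQcont : Continuous Q := continuous_quadraticForm Q
  have hβcont : Continuous (strain 0 0 (α - quadMap u v w)) := continuous_strain 0 0 hβ
  have hQint : IntegrableOn (fun p : ℝ × ℝ ↦ Q (p.1 • (a₁, u, v) + p.2 • (a₂, v, w)))
      (openDisc c) := integrableOn_openDisc_of_continuous c (by fun_prop)
  have hpolar : IntegrableOn (fun p : ℝ × ℝ ↦ polar Q (p.1 • (a₁, u, v) + p.2 • (a₂, v, w))
      (strain 0 0 (α - quadMap u v w) p)) (openDisc c) :=
    integrableOn_openDisc_of_continuous c (by unfold polar; fun_prop)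
  calc ∫ p in openDisc c, Q (p.1 • (a₁, u, v) + p.2 • (a₂, v, w))
      = ∫ p in openDisc c, (Q (p.1 • (a₁, u, v) + p.2 • (a₂, v, w)) +
          polar Q (p.1 • (a₁, u, v) + p.2 • (a₂, v, w)) (strain 0 0 (α - quadMap u v w) p)) := by
        rw [integral_add hQint hpolar, setIntegral_openDisc_polar_strain_eq_zero c huvw hβ,
          add_zero]
    _ ≤ ∫ p in openDisc c, Q (strain a₁ a₂ α p) := by
        refine integral_mono (hQint.add hpolar) (integrableOn_openDisc_of_continuous c
          (hQcont.comp (continuous_strain a₁ a₂ hα))) fun p ↦ ?_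
        simpa only [hdecomp] using add_polar_le_quadraticForm_add hQ _ _

end Strain

theorem Q2_circular_cross_section_pointwise_minimization_general {V : Type*}
    [NormedAddCommGroup V] [NormedSpace ℝ V] [FiniteDimensional ℝ V]
    (Q : QuadraticForm ℝ (V × V × V)) (hQ : ∀ G, 0 ≤ Q G) {c : ℝ} (hc : 0 ≤ c) (a₁ a₂ : V) :
    ∃ u v w : V,
      (∀ u' v' w' : V, Q (a₁, u, v) + Q (a₂, v, w) ≤ Q (a₁, u', v') + Q (a₂, v', w')) ∧
      IsLeast {t : ℝ | ∃ α : ℝ × ℝ → V, ContDiff ℝ 1 α ∧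
          t = ∫ p in openDisc c, Q (strain a₁ a₂ α p)}
        (Real.pi * c ^ 2 / 4 * (Q (a₁, u, v) + Q (a₂, v, w))) := by
  obtain ⟨u, v, w, huvw⟩ := exists_isCriticalPair hQ a₁ a₂
  have hmin := setIntegral_openDisc_quadraticForm hc Q (a₁, u, v) (a₂, v, w)
  refine ⟨u, v, w, huvw.add_le_add hQ, ?_, ?_⟩
  · exact ⟨quadMap u v w, contDiff_quadMap u v w, by simp only [strain_quadMap, hmin]⟩
  · rintro _ ⟨α, hα, rfl⟩
    exact hmin ▸ setIntegral_openDisc_le_setIntegral_strain hQ c huvw hα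

/-- The linear map taking the columns of a matrix `G` to `R G Rᵀ`. -/
def conjColMat (R : M3) : (Fin 3 → ℝ) × (Fin 3 → ℝ) × (Fin 3 → ℝ) →ₗ[ℝ] M3 where
  toFun G := R * colMat G.1 G.2.1 G.2.2 * R.transpose
  map_add' G H := by
    rw [← add_mul, ← mul_add]
    congr 2
    ext i j
    fin_cases j <;> rfl
  map_smul' t G := by
    rw [RingHom.id_apply, ← smul_mul_assoc, ← mul_smul_comm]
    congr 2
    ext i j
    fin_cases j <;> rfl

lemma mulVec_zero_cons_of_transpose_eq_neg {P : M3} (hP : P.transpose = -P) (x y : ℝ) :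
    P.mulVec ![0, x, y] = x • ![P 0 1, 0, -(P 1 2)] + y • ![P 0 2, P 1 2, 0] := by
  have hskew (i j : Fin 3) : P j i = -P i j := congrFun₂ hP i j
  have h₁₁ : P 1 1 = 0 := self_eq_neg.1 (hskew 1 1)
  have h₂₂ : P 2 2 = 0 := self_eq_neg.1 (hskew 2 2)
  ext i
  fin_cases i <;> simp [Matrix.mulVec, dotProduct, Fin.sum_univ_three, h₁₁, h₂₂, hskew 1 2] <;> ring

theorem Q2_circular_cross_section_pointwise_minimization
    (B : M3 →ₗ[ℝ] M3 →ₗ[ℝ] ℝ) (hBsymm : ∀ X Y, B X Y = B Y X)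
    (hBnn : ∀ G, 0 ≤ B G G)
    (hsympart : ∀ G : M3,
      B G G = B ((2:ℝ)⁻¹ • (G + G.transpose)) ((2:ℝ)⁻¹ • (G + G.transpose)))
    (hposdef : ∀ G : M3, G.transpose = G → G ≠ 0 → 0 < B G G)
    (R₀ : M3) (hR₀ : R₀ ∈ SO3)
    (P : M3) (hskew : P.transpose = -P) :
    ∃ u v w : Fin 3 → ℝ,
      (∀ u' v' w' : Fin 3 → ℝ,
        B (R₀ * colMat ![P 0 1, 0, -(P 1 2)] u v * R₀.transpose)
            (R₀ * colMat ![P 0 1, 0, -(P 1 2)] u v * R₀.transpose) +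
          B (R₀ * colMat ![P 0 2, P 1 2, 0] v w * R₀.transpose)
            (R₀ * colMat ![P 0 2, P 1 2, 0] v w * R₀.transpose) ≤
        B (R₀ * colMat ![P 0 1, 0, -(P 1 2)] u' v' * R₀.transpose)
            (R₀ * colMat ![P 0 1, 0, -(P 1 2)] u' v' * R₀.transpose) +
          B (R₀ * colMat ![P 0 2, P 1 2, 0] v' w' * R₀.transpose)
            (R₀ * colMat ![P 0 2, P 1 2, 0] v' w' * R₀.transpose)) ∧
      sInf {t : ℝ | ∃ α : ℝ × ℝ → Fin 3 → ℝ, ContDiff ℝ 1 α ∧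
          t = ∫ p in unitDisc,
            B (R₀ * colMat (P.mulVec ![0, p.1, p.2])
                  (deriv (fun x => α (x, p.2)) p.1) (deriv (fun y => α (p.1, y)) p.2) *
                R₀.transpose)
              (R₀ * colMat (P.mulVec ![0, p.1, p.2])
                  (deriv (fun x => α (x, p.2)) p.1) (deriv (fun y => α (p.1, y)) p.2) *
                R₀.transpose)} =
        (1 / (4 * Real.pi)) *
          (B (R₀ * colMat ![P 0 1, 0, -(P 1 2)] u v * R₀.transpose)
              (R₀ * colMat ![P 0 1, 0, -(P 1 2)] u v * R₀.transpose) +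
            B (R₀ * colMat ![P 0 2, P 1 2, 0] v w * R₀.transpose)
              (R₀ * colMat ![P 0 2, P 1 2, 0] v w * R₀.transpose)) := by
  obtain ⟨u, v, w, hmin, hleast⟩ := Q2_circular_cross_section_pointwise_minimization_general
    ((LinearMap.BilinMap.toQuadraticMap B).comp (conjColMat R₀)) (fun _ ↦ hBnn _)
    (one_div_pos.2 Real.pi_pos).le ![P 0 1, 0, -(P 1 2)] ![P 0 2, P 1 2, 0]
  have hconst : Real.pi * (1 / Real.pi) ^ 2 / 4 = 1 / (4 * Real.pi) := by field_simp
  simp only [mulVec_zero_cons_of_transpose_eq_neg hskew, ← hconst]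
  -- `unitDisc` unfolds to `openDisc (1 / π)`, and the form at `strain` to the integrand.
  exact ⟨u, v, w, hmin, hleast.csInf_eq⟩
end
end

section
/- The set {F e₁ : F ∈ convexHull(SO(3))} equals the closed unit ball of ℝ³. That is: (i) for every F in the convex hull of SO(3) one has ‖F e₁‖ ≤ 1; and (ii) for every z ∈ ℝ³ with ‖z‖ ≤ 1 there exist d₂, d₃ ∈ ℝ³ such that the matrix with columns z, d₂, d₃ belongs to the convex hull of SO(3). -/
/-!
The map `F ↦ F v` is linear, so it sends the convex hull of `SO(n)` to the convex hull of the orbit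
`SO(n) v`. For `n ≥ 2` this orbit is the whole sphere of radius `‖v‖`: the reflection exchanging two
vectors `v` and `w` of equal norm becomes a rotation once it is precomposed with a reflection
fixing `v`. The convex hull of a sphere is the closed ball it bounds.
-/

open MeasureTheory Set

noncomputable section

section Rotation

open Module Submodule

variable {𝕜 E : Type*} [RCLike 𝕜] [NormedAddCommGroup E]

lemma exists_ne_zero_inner_eq_zero [InnerProductSpace 𝕜 E] (hE : 1 < finrank 𝕜 E) (v : E) :
    ∃ u : E, u ≠ 0 ∧ inner 𝕜 u v = 0 := by
  have hspan : (𝕜 ∙ v) ≠ ⊤ := fun htop =>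
    hE.not_ge (finrank_le_one v fun _ => mem_span_singleton.mp (htop ▸ mem_top))
  obtain ⟨u, hu, hu0⟩ := exists_mem_ne_zero_of_ne_bot (mt orthogonal_eq_bot_iff.mp hspan)
  exact ⟨u, hu0, mem_orthogonal_singleton_iff_inner_left.mp hu⟩

lemma det_reflection_orthogonal_span_singleton [InnerProductSpace 𝕜 E] [FiniteDimensional 𝕜 E]
    {u : E} (hu : u ≠ 0) : LinearMap.det (𝕜 ∙ u)ᗮ.reflection.toLinearMap = -1 := by
  rw [det_reflection, orthogonal_orthogonal, finrank_span_singleton hu, pow_one]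

theorem exists_linearIsometryEquiv_det_eq_one_apply_eq [InnerProductSpace ℝ E]
    [FiniteDimensional ℝ E] (hE : 1 < finrank ℝ E) {v w : E} (hvw : ‖v‖ = ‖w‖) :
    ∃ f : E ≃ₗᵢ[ℝ] E, LinearMap.det f.toLinearMap = 1 ∧ f v = w := by
  rcases eq_or_ne v w with rfl | hne
  · exact ⟨.refl ℝ E, LinearMap.det_id, rfl⟩
  obtain ⟨u, hu0, huv⟩ := exists_ne_zero_inner_eq_zero hE v
  have hfix : (ℝ ∙ u)ᗮ.reflection v = v :=
    reflection_mem_subspace_eq_self (mem_orthogonal_singleton_iff_inner_right.mpr huv)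
  refine ⟨(ℝ ∙ u)ᗮ.reflection.trans (ℝ ∙ (v - w))ᗮ.reflection, ?_, ?_⟩
  · calc LinearMap.det ((ℝ ∙ u)ᗮ.reflection.trans (ℝ ∙ (v - w))ᗮ.reflection).toLinearMap
      _ = LinearMap.det (ℝ ∙ (v - w))ᗮ.reflection.toLinearMap *
            LinearMap.det (ℝ ∙ u)ᗮ.reflection.toLinearMap := LinearMap.det_comp _ _
      _ = 1 := by
        rw [det_reflection_orthogonal_span_singleton (sub_ne_zero.mpr hne),
          det_reflection_orthogonal_span_singleton hu0, neg_one_mul, neg_neg]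
  · rw [LinearIsometryEquiv.trans_apply, hfix, reflection_sub hvw]

end Rotation

section SpecialOrthogonalGroup

open Matrix Metric

variable {𝕜 n : Type*} [RCLike 𝕜] [Fintype n] [DecidableEq n]

lemma norm_toEuclideanLin_of_mem_unitaryGroup {U : Matrix n n 𝕜}
    (hU : U ∈ unitaryGroup n 𝕜) (v : EuclideanSpace 𝕜 n) : ‖U.toEuclideanLin v‖ = ‖v‖ :=
  ContinuousLinearMap.norm_map_of_mem_unitary
    (Unitary.map_mem (toEuclideanCLM (n := n) (𝕜 := 𝕜)) hU) v

lemma toEuclideanLin_symm_mem_specialUnitaryGroup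
    (f : EuclideanSpace 𝕜 n ≃ₗᵢ[𝕜] EuclideanSpace 𝕜 n) (hf : LinearMap.det f.toLinearMap = 1) :
    toEuclideanLin.symm f.toLinearMap ∈ specialUnitaryGroup n 𝕜 := by
  rw [mem_specialUnitaryGroup_iff]
  refine ⟨f.toMatrix_mem_unitaryGroup (EuclideanSpace.basisFun n 𝕜)
    (EuclideanSpace.basisFun n 𝕜), ?_⟩
  rw [← LinearMap.det_toLpLin 2, LinearEquiv.apply_symm_apply, hf]

theorem image_specialOrthogonalGroup_toEuclideanLin_apply_eq_sphere [Nontrivial n]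
    (v : EuclideanSpace ℝ n) :
    (fun R : Matrix n n ℝ => R.toEuclideanLin v) '' specialOrthogonalGroup n ℝ = sphere 0 ‖v‖ := by
  apply Subset.antisymm
  · rintro _ ⟨R, hR, rfl⟩
    exact mem_sphere_zero_iff_norm.mpr (norm_toEuclideanLin_of_mem_unitaryGroup hR.1 v)
  · intro w hw
    have hdim : 1 < Module.finrank ℝ (EuclideanSpace ℝ n) :=
      finrank_euclideanSpace (𝕜 := ℝ) (ι := n) ▸ Fintype.one_lt_card
    obtain ⟨f, hdet, hfv⟩ := exists_linearIsometryEquiv_det_eq_one_apply_eq hdim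
      (mem_sphere_zero_iff_norm.mp hw).symm
    exact ⟨_, toEuclideanLin_symm_mem_specialUnitaryGroup f hdet,
      (LinearMap.congr_fun (toEuclideanLin.apply_symm_apply f.toLinearMap) v).trans hfv⟩

theorem convexHull_SO3_first_column_eq_closed_unit_ball_general [Nontrivial n]
    (v : EuclideanSpace ℝ n) :
    (fun F : Matrix n n ℝ => F.toEuclideanLin v) ''
      convexHull ℝ (specialOrthogonalGroup n ℝ : Set (Matrix n n ℝ)) = closedBall 0 ‖v‖ := by
  let evalAt : Matrix n n ℝ →ₗ[ℝ] EuclideanSpace ℝ n :=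
    LinearMap.applyₗ v ∘ₗ toEuclideanLin.toLinearMap
  calc evalAt '' convexHull ℝ (specialOrthogonalGroup n ℝ)
    _ = convexHull ℝ (evalAt '' specialOrthogonalGroup n ℝ) := evalAt.image_convexHull _
    _ = convexHull ℝ (sphere 0 ‖v‖) :=
      congrArg _ (image_specialOrthogonalGroup_toEuclideanLin_apply_eq_sphere v)
    _ = closedBall 0 ‖v‖ := convexHull_sphere_eq_closedBall 0 (norm_nonneg v)

end SpecialOrthogonalGroup

lemma SO3_eq_specialOrthogonalGroup : SO3 = Matrix.specialOrthogonalGroup (Fin 3) ℝ := by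
  ext R
  exact and_congr_left' (Matrix.mem_orthogonalGroup_iff' (Fin 3) ℝ).symm

lemma enorm3_eq_norm (v : Fin 3 → ℝ) : enorm3 v = ‖WithLp.toLp 2 v‖ := by
  simp only [enorm3, EuclideanSpace.norm_eq, Real.norm_eq_abs, sq_abs]

lemma colMat_col (F : M3) : colMat (F.col 0) (F.col 1) (F.col 2) = F := by
  ext i j
  fin_cases j <;> rfl

lemma exists_mem_convexHull_SO3_col_zero_eq_iff (z : Fin 3 → ℝ) :
    (∃ F ∈ convexHull ℝ SO3, F.col 0 = z) ↔ enorm3 z ≤ 1 := by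
  have h := Set.ext_iff.mp (convexHull_SO3_first_column_eq_closed_unit_ball_general
    (EuclideanSpace.single (0 : Fin 3) 1)) (WithLp.toLp 2 z)
  simpa [SO3_eq_specialOrthogonalGroup, enorm3_eq_norm, Matrix.toLpLin_apply] using h

theorem convexHull_SO3_first_column_eq_closed_unit_ball :
    (∀ F ∈ convexHull ℝ SO3, enorm3 (F.mulVec (Pi.single 0 1)) ≤ 1) ∧
    (∀ z : Fin 3 → ℝ, enorm3 z ≤ 1 →
      ∃ d₂ d₃ : Fin 3 → ℝ, colMat z d₂ d₃ ∈ convexHull ℝ SO3) := by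
  simp only [Matrix.mulVec_single_one]
  refine ⟨fun F hF => (exists_mem_convexHull_SO3_col_zero_eq_iff _).mp ⟨F, hF, rfl⟩, fun z hz => ?_⟩
  obtain ⟨F, hF, rfl⟩ := (exists_mem_convexHull_SO3_col_zero_eq_iff z).mpr hz
  exact ⟨F.col 1, F.col 2, (colMat_col F).symm ▸ hF⟩
end
end

section
/- Let W : (0,L) × ℝ^{3×3} → [0,∞) be a Carathéodory function (measurable in s for each F, continuous in F for a.e. s) satisfying W(s,F) ≤ C₃·dist²(F, SO(3)) for a.e. s ∈ (0,L) and every F ∈ ℝ^{3×3}, for some C₃ > 0. Let v, w₂, w₃ ∈ C¹([0,L];ℝ³) and for h > 0 define v⁽ʰ⁾ : Ω → ℝ³ by v⁽ʰ⁾(s,ξ,ζ) := v(s) + hξw₂(s) + hζw₃(s). Then lim_{h→0⁺} ∫_Ω W(s, (∇_h v⁽ʰ⁾)(∇_hΨ⁽ʰ⁾)⁻¹) det(∇_hΨ⁽ʰ⁾) ds dξ dζ = ∫₀ᴸ W(s, (v′(s)|w₂(s)|w₃(s)) R₀(s)ᵀ) ds. -/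
open MeasureTheory Set

noncomputable section

/-- The string recovery sequence `v⁽ʰ⁾(s,ξ,ζ) = v(s) + hξw₂(s) + hζw₃(s)`. -/
def vh15 (v w₂ w₃ : ℝ → Fin 3 → ℝ) (h : ℝ) (p : ℝ × ℝ × ℝ) : Fin 3 → ℝ :=
  v p.1 + (h * p.2.1) • w₂ p.1 + (h * p.2.2) • w₃ p.1

/-!
On the rescaled domain both scaled gradients are, for `h ≠ 0`, explicit expressions that remain
jointly continuous in `(h, s, ξ, ζ)` up to `h = 0`, where they equal `(v′ | w₂ | w₃)` and
`R₀ ∈ SO(3)`. Hence, near `h = 0` and over the compact closure of the domain, the deformation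
gradient and the Jacobian converge and stay bounded. The growth condition turns this bound into a
constant majorant of the energy densities, and dominated convergence gives the limit; the limit
integrand does not depend on `(ξ, ζ)`, so the cross-section only contributes its area.
-/

open Filter Function TopologicalSpace Topology
open scoped Matrix

section Caratheodory

variable {X E F : Type*} [TopologicalSpace E] [MetrizableSpace E] [SecondCountableTopology E]

lemma aestronglyMeasurable_comp_of_ae_continuous [MeasurableSpace X] [TopologicalSpace F]
    [PseudoMetrizableSpace F] [Nonempty F] {ρ : Measure X} {W : X → E → F}
    (hWmeas : ∀ e, StronglyMeasurable fun x => W x e) (hWcont : ∀ᵐ x ∂ρ, Continuous (W x))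
    {G : X → E} (hG : AEStronglyMeasurable G ρ) :
    AEStronglyMeasurable (fun x => W x (G x)) ρ := by
  classical
  borelize E
  -- Redefining `W` on a measurable null set makes it continuous for every `x`.
  obtain ⟨N, hWN, hN, hρN⟩ := exists_measurable_superset_of_null (ae_iff.1 hWcont)
  let W' : E → X → F := fun e x => if x ∈ N then Classical.arbitrary F else W x e
  have hW'cont : ∀ x, Continuous fun e => W' e x := fun x => by
    by_cases hx : x ∈ N
    · simpa only [W', if_pos hx] using continuous_const
    · simpa only [W', if_neg hx] using not_not.1 fun h => hx (hWN h)
  have hW' : StronglyMeasurable (uncurry W') :=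
    stronglyMeasurable_uncurry_of_continuous_of_stronglyMeasurable hW'cont
      fun e => StronglyMeasurable.ite hN stronglyMeasurable_const (hWmeas e)
  refine ⟨fun x => W' (hG.mk G x) x,
    hW'.comp_measurable (hG.stronglyMeasurable_mk.measurable.prodMk measurable_id), ?_⟩
  filter_upwards [hG.ae_eq_mk, measure_eq_zero_iff_ae_notMem.1 hρN] with x hGx hx
  simp only [W', if_neg hx, ← hGx]

end Caratheodory

section CompactPerturbation

variable {T X E F : Type*} [TopologicalSpace T] [TopologicalSpace X] {K : Set X} {t₀ : T}

lemma exists_eventually_forall_le_of_isCompact (hK : IsCompact K) {g : T → X → ℝ}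
    (hg : ∀ x ∈ K, ContinuousAt (uncurry g) (t₀, x)) :
    ∃ C, ∀ᶠ t in 𝓝 t₀, ∀ x ∈ K, g t x ≤ C := by
  have hg₀ : ContinuousOn (g t₀) K := fun x hx =>
    ((hg x hx).comp (f := fun x => (t₀, x)) (by fun_prop)).continuousWithinAt
  obtain ⟨C, hC⟩ := hK.bddAbove_image hg₀
  refine ⟨C + 1, hK.eventually_forall_of_forall_eventually fun x hx => ?_⟩
  have hlt : g t₀ x < C + 1 := (hC (mem_image_of_mem _ hx)).trans_lt (lt_add_one C)
  exact ((hg x hx).eventually_lt_const hlt).mono fun _ => le_of_lt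

variable [FirstCountableTopology T] [MeasurableSpace X] [OpensMeasurableSpace X]
  {ρ : Measure X} [IsFiniteMeasureOnCompacts ρ] {S : Set X}

theorem tendsto_setIntegral_comp_of_caratheodory [TopologicalSpace E] [MetrizableSpace E]
    [SecondCountableTopology E] [NormedAddCommGroup F] [NormedSpace ℝ F]
    (hK : IsCompact K) (hS : MeasurableSet S) (hSK : S ⊆ K) {W : X → E → F}
    (hWmeas : ∀ e, StronglyMeasurable fun x => W x e)
    (hWcont : ∀ᵐ x ∂ρ.restrict S, Continuous (W x)) {Φ : E → ℝ} (hΦ : Continuous Φ)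
    (hWΦ : ∀ᵐ x ∂ρ.restrict S, ∀ e, ‖W x e‖ ≤ Φ e) {G : T → X → E}
    (hG : ∀ x ∈ K, ∀ᶠ q in 𝓝 (t₀, x), ContinuousAt (uncurry G) q) :
    Tendsto (fun t => ∫ x in S, W x (G t x) ∂ρ) (𝓝 t₀) (𝓝 (∫ x in S, W x (G t₀ x) ∂ρ)) := by
  have hG₀ : ∀ x ∈ K, ContinuousAt (uncurry G) (t₀, x) := fun x hx => (hG x hx).self_of_nhds
  have hSfin : IsFiniteMeasure (ρ.restrict S) :=
    isFiniteMeasure_restrict.2 ((measure_mono hSK).trans_lt hK.measure_lt_top).ne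
  obtain ⟨C, hC⟩ := exists_eventually_forall_le_of_isCompact hK
    (g := fun t x => Φ (G t x)) fun x hx => hΦ.continuousAt.comp (hG₀ x hx)
  have hGcont : ∀ᶠ t in 𝓝 t₀, ∀ x ∈ K, ContinuousAt (uncurry G) (t, x) :=
    hK.eventually_forall_of_forall_eventually hG
  refine tendsto_integral_filter_of_dominated_convergence (fun _ => C) ?_ ?_
    (integrable_const C) ?_
  · filter_upwards [hGcont] with t ht
    have hGt : ContinuousOn (G t) S := fun x hx =>
      ((ht x (hSK hx)).comp (f := fun x => (t, x)) (by fun_prop)).continuousWithinAt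
    exact aestronglyMeasurable_comp_of_ae_continuous hWmeas hWcont (hGt.aestronglyMeasurable hS)
  · filter_upwards [hC] with t ht
    filter_upwards [hWΦ, ae_restrict_mem hS] with x hx hxS
    exact (hx _).trans (ht x (hSK hxS))
  · filter_upwards [hWcont, ae_restrict_mem hS] with x hx hxS
    exact (hx.tendsto _).comp
      ((hG₀ x (hSK hxS)).tendsto.comp (Continuous.prodMk_left x).continuousAt)

/-- `V` plays the role of the gradient of the deformation and `A` that of the gradient of the
parametrization of the reference configuration. -/
theorem tendsto_setIntegral_comp_mul_inv_mul_det {n : Type*} [Fintype n] [DecidableEq n]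
    (hK : IsCompact K) (hS : MeasurableSet S) (hSK : S ⊆ K) {W : X → Matrix n n ℝ → ℝ}
    (hWmeas : ∀ M, Measurable fun x => W x M)
    (hWcont : ∀ᵐ x ∂ρ.restrict S, Continuous (W x)) {Φ : Matrix n n ℝ → ℝ} (hΦ : Continuous Φ)
    (hWΦ : ∀ᵐ x ∂ρ.restrict S, ∀ M, |W x M| ≤ Φ M) {V A : T → X → Matrix n n ℝ}
    (hV : Continuous (uncurry V)) (hA : Continuous (uncurry A))
    (hdet : ∀ x ∈ K, (A t₀ x).det ≠ 0) :
    Tendsto (fun t => ∫ x in S, W x (V t x * (A t x)⁻¹) * (A t x).det ∂ρ) (𝓝 t₀)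
      (𝓝 (∫ x in S, W x (V t₀ x * (A t₀ x)⁻¹) * (A t₀ x).det ∂ρ)) := by
  have : MetrizableSpace (Matrix n n ℝ) := inferInstanceAs (MetrizableSpace (n → n → ℝ))
  have : SecondCountableTopology (Matrix n n ℝ) :=
    inferInstanceAs (SecondCountableTopology (n → n → ℝ))
  have hinv : ∀ q, (uncurry A q).det ≠ 0 → ContinuousAt (fun q => (uncurry A q)⁻¹) q :=
    fun q hq => (continuousAt_matrix_inv _
      (Ring.inverse_eq_inv' (G₀ := ℝ) ▸ continuousAt_inv₀ hq)).comp hA.continuousAt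
  -- The density `(M, J) ↦ W x M * J` on `Matrix n n ℝ × ℝ` is again a Carathéodory function.
  refine tendsto_setIntegral_comp_of_caratheodory (E := Matrix n n ℝ × ℝ)
    (W := fun x e => W x e.1 * e.2) (Φ := fun e => Φ e.1 * |e.2|)
    (G := fun t x => (V t x * (A t x)⁻¹, (A t x).det)) hK hS hSK
    (fun e => ((hWmeas e.1).mul_const e.2).stronglyMeasurable) ?_ (by fun_prop) ?_ ?_
  · filter_upwards [hWcont] with x hx
    fun_prop
  · filter_upwards [hWΦ] with x hx e
    rw [norm_mul, Real.norm_eq_abs, Real.norm_eq_abs]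
    exact mul_le_mul_of_nonneg_right (hx _) (abs_nonneg _)
  · intro x hx
    filter_upwards [hA.matrix_det.continuousAt.eventually_ne (hdet x hx)] with q hq
    exact (hV.continuousAt.mul (hinv q hq)).prodMk hA.matrix_det.continuousAt

end CompactPerturbation

section Cylinder

variable {α β : Type*} [MeasurableSpace α] [MeasurableSpace β] {μ : Measure α} {ν : Measure β}
  [SFinite μ] [SFinite ν] {s : Set α}

lemma ae_restrict_prod_of_ae_restrict_fst {p : α → Prop} (hp : ∀ᵐ x ∂μ.restrict s, p x)
    (t : Set β) : ∀ᵐ z ∂(μ.prod ν).restrict (s ×ˢ t), p z.1 := by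
  rw [← Measure.prod_restrict]
  exact Measure.quasiMeasurePreserving_fst.ae hp

lemma setIntegral_prod_fun_fst {E : Type*} [NormedAddCommGroup E] [NormedSpace ℝ E]
    (f : α → E) (s : Set α) (t : Set β) :
    ∫ z in s ×ˢ t, f z.1 ∂μ.prod ν = ν.real t • ∫ x in s, f x ∂μ := by
  rw [← Measure.prod_restrict, integral_fun_fst, measureReal_restrict_apply_univ]

end Cylinder

section SpecialOrthogonal

lemma SO3.inv_eq_transpose {R : M3} (hR : R ∈ SO3) : R⁻¹ = Rᵀ :=
  Matrix.inv_eq_left_inv hR.1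

open scoped Matrix.Norms.Frobenius in
lemma distSO3_eq_infDist (F : M3) : distSO3 F = Metric.infDist F SO3 := by
  rw [distSO3, sInf_image', Metric.infDist_eq_iInf]
  simp only [frob3, dist_eq_norm, Matrix.frobenius_norm_def, Real.sqrt_eq_rpow, Real.norm_eq_abs,
    Real.rpow_ofNat, sq_abs]

open scoped Matrix.Norms.Frobenius in
lemma continuous_distSO3 : Continuous distSO3 := by
  rw [funext distSO3_eq_infDist]
  exact Metric.continuous_infDist_pt SO3

end SpecialOrthogonal

section ScaledGradient

/-- The closed form of the scaled gradient `∇_h z` of `z = a + hξb + hζc`, which unlike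
`scaledGrad` also makes sense at `h = 0`. -/
def vh15Grad (a b c : ℝ → Fin 3 → ℝ) (h : ℝ) (p : ℝ × ℝ × ℝ) : M3 :=
  colMat (deriv a p.1 + (h * p.2.1) • deriv b p.1 + (h * p.2.2) • deriv c p.1) (b p.1) (c p.1)

variable {a b c : ℝ → Fin 3 → ℝ}

lemma scaledGrad_vh15 (ha : Differentiable ℝ a) (hb : Differentiable ℝ b)
    (hc : Differentiable ℝ c) {h : ℝ} (hh : h ≠ 0) :
    scaledGrad h (vh15 a b c h) = vh15Grad a b c h := by
  have coord {f : ℝ → Fin 3 → ℝ} (hf : Differentiable ℝ f) (s : ℝ) (i : Fin 3) :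
      HasDerivAt (fun t => f t i) (deriv f s i) s := hasDerivAt_pi.1 (hf s).hasDerivAt i
  ext ⟨s, ξ, ζ⟩ i j
  have hs : HasDerivAt (fun t => vh15 a b c h (t, ξ, ζ) i)
      (deriv a s i + h * ξ * deriv b s i + h * ζ * deriv c s i) s :=
    ((coord ha s i).add ((coord hb s i).const_mul (h * ξ))).add ((coord hc s i).const_mul (h * ζ))
  have hξ : HasDerivAt (fun t => vh15 a b c h (s, t, ζ) i) (h * b s i) ξ := by
    simpa [vh15] using
      ((((hasDerivAt_id ξ).const_mul h).mul_const (b s i)).const_add (a s i)).add_const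
        (h * ζ * c s i)
  have hζ : HasDerivAt (fun t => vh15 a b c h (s, ξ, t) i) (h * c s i) ζ := by
    simpa [vh15] using
      (((hasDerivAt_id ζ).const_mul h).mul_const (c s i)).const_add (a s i + h * ξ * b s i)
  simp only [scaledGrad, vh15Grad, colMat, Matrix.of_apply, hs.deriv, hξ.deriv, hζ.deriv,
    inv_mul_cancel_left₀ hh, Pi.add_apply, Pi.smul_apply, smul_eq_mul]

lemma continuous_vh15Grad (ha : ContDiff ℝ 1 a) (hb : ContDiff ℝ 1 b) (hc : ContDiff ℝ 1 c) :
    Continuous (uncurry (vh15Grad a b c)) := by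
  have : Continuous (deriv a) := ha.continuous_deriv le_rfl
  have : Continuous (deriv b) := hb.continuous_deriv le_rfl
  have : Continuous (deriv c) := hc.continuous_deriv le_rfl
  have : Continuous b := hb.continuous
  have : Continuous c := hc.continuous
  refine continuous_matrix fun i j => ?_
  simp only [uncurry_def, vh15Grad, colMat, Matrix.of_apply, Pi.add_apply, Pi.smul_apply,
    smul_eq_mul]
  split_ifs <;> fun_prop

lemma vh15Grad_zero (a b c : ℝ → Fin 3 → ℝ) (p : ℝ × ℝ × ℝ) :
    vh15Grad a b c 0 p = colMat (deriv a p.1) (b p.1) (c p.1) := by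
  simp [vh15Grad]

lemma colMat_mulVec_single (R : M3) :
    colMat (R *ᵥ Pi.single 0 1) (R *ᵥ Pi.single 1 1) (R *ᵥ Pi.single 2 1) = R := by
  ext i j
  fin_cases j <;> simp [colMat]

lemma contDiff_mulVec_const {E m n : Type*} [NormedAddCommGroup E] [NormedSpace ℝ E] [Fintype m]
    [Fintype n] {k : WithTop ℕ∞} {R : E → Matrix m n ℝ}
    (hR : ∀ i j, ContDiff ℝ k fun s => R s i j) (x : n → ℝ) :
    ContDiff ℝ k fun s => R s *ᵥ x := by
  refine contDiff_pi.2 fun i => ?_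
  simp only [Matrix.mulVec, dotProduct]
  exact ContDiff.sum fun j _ => (hR i j).mul contDiff_const

lemma contDiff_nu2 {R₀ : ℝ → M3} {k : WithTop ℕ∞} (hR₀ : ∀ i j, ContDiff ℝ k fun s => R₀ s i j) :
    ContDiff ℝ k (nu2 R₀) :=
  contDiff_mulVec_const hR₀ _

lemma contDiff_nu3 {R₀ : ℝ → M3} {k : WithTop ℕ∞} (hR₀ : ∀ i j, ContDiff ℝ k fun s => R₀ s i j) :
    ContDiff ℝ k (nu3 R₀) :=
  contDiff_mulVec_const hR₀ _

lemma Psih_eq_vh15 (γ : ℝ → Fin 3 → ℝ) (R₀ : ℝ → M3) (h : ℝ) :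
    Psih γ R₀ h = vh15 γ (nu2 R₀) (nu3 R₀) h :=
  rfl

lemma vh15Grad_zero_of_frame {γ : ℝ → Fin 3 → ℝ} {R₀ : ℝ → M3} {p : ℝ × ℝ × ℝ}
    (hp : R₀ p.1 *ᵥ Pi.single 0 1 = deriv γ p.1) :
    vh15Grad γ (nu2 R₀) (nu3 R₀) 0 p = R₀ p.1 := by
  rw [vh15Grad_zero, ← hp, nu2, nu3, colMat_mulVec_single]

end ScaledGradient

theorem string_recovery_sequence_energy_limit_general {L : ℝ} {γ : ℝ → Fin 3 → ℝ}
    (hγ : ContDiff ℝ 1 γ) {R₀ : ℝ → M3} (hR₀ : ∀ i j, ContDiff ℝ 1 fun s => R₀ s i j)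
    (hR₀SO : ∀ s ∈ Icc 0 L, R₀ s ∈ SO3) (hR₀e1 : ∀ s ∈ Icc 0 L, R₀ s *ᵥ Pi.single 0 1 = deriv γ s)
    {D : Set (ℝ × ℝ)} (hD : MeasurableSet D) (hDbdd : Bornology.IsBounded D)
    {W : ℝ → M3 → ℝ} (hWmeas : ∀ F, Measurable fun s => W s F)
    (hWcont : ∀ᵐ s ∂volume.restrict (Ioo 0 L), Continuous (W s)) {Φ : M3 → ℝ} (hΦ : Continuous Φ)
    (hWΦ : ∀ᵐ s ∂volume.restrict (Ioo 0 L), ∀ F, |W s F| ≤ Φ F) {v w₂ w₃ : ℝ → Fin 3 → ℝ}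
    (hv : ContDiff ℝ 1 v) (hw₂ : ContDiff ℝ 1 w₂) (hw₃ : ContDiff ℝ 1 w₃) :
    Tendsto
      (fun h : ℝ => ∫ p in Ioo 0 L ×ˢ D,
        W p.1 (scaledGrad h (vh15 v w₂ w₃ h) p * (scaledGrad h (Psih γ R₀ h) p)⁻¹) *
          (scaledGrad h (Psih γ R₀ h) p).det)
      (𝓝[>] 0)
      (𝓝 (volume.real D * ∫ s in Ioo 0 L, W s (colMat (deriv v s) (w₂ s) (w₃ s) * (R₀ s)ᵀ))) := by
  have hν₂ := contDiff_nu2 hR₀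
  have hν₃ := contDiff_nu3 hR₀
  have hA₀ : ∀ p : ℝ × ℝ × ℝ, p.1 ∈ Icc 0 L → vh15Grad γ (nu2 R₀) (nu3 R₀) 0 p = R₀ p.1 :=
    fun p hp => vh15Grad_zero_of_frame (hR₀e1 _ hp)
  have hlim : ∫ p in Ioo 0 L ×ˢ D,
      W p.1 (vh15Grad v w₂ w₃ 0 p * (vh15Grad γ (nu2 R₀) (nu3 R₀) 0 p)⁻¹) *
        (vh15Grad γ (nu2 R₀) (nu3 R₀) 0 p).det =
      volume.real D * ∫ s in Ioo 0 L, W s (colMat (deriv v s) (w₂ s) (w₃ s) * (R₀ s)ᵀ) := by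
    rw [← smul_eq_mul, ← setIntegral_prod_fun_fst]
    refine setIntegral_congr_fun (measurableSet_Ioo.prod hD) fun p hp => ?_
    have hs : p.1 ∈ Icc 0 L := Ioo_subset_Icc_self hp.1
    simp only [hA₀ p hs, vh15Grad_zero, SO3.inv_eq_transpose (hR₀SO _ hs), (hR₀SO _ hs).2, mul_one]
  rw [← hlim]
  refine Tendsto.congr' ?_ <| (tendsto_setIntegral_comp_mul_inv_mul_det
    (ρ := volume) (W := fun p => W p.1)
    (isCompact_Icc.prod hDbdd.isCompact_closure) (measurableSet_Ioo.prod hD)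
    (prod_mono Ioo_subset_Icc_self subset_closure) (fun F => (hWmeas F).comp measurable_fst)
    (ae_restrict_prod_of_ae_restrict_fst hWcont D) hΦ (ae_restrict_prod_of_ae_restrict_fst hWΦ D)
    (continuous_vh15Grad hv hw₂ hw₃) (continuous_vh15Grad hγ hν₂ hν₃) fun p hp => ?_).mono_left
      nhdsWithin_le_nhds
  · filter_upwards [self_mem_nhdsWithin] with h hh
    have hdiff {f : ℝ → Fin 3 → ℝ} (hf : ContDiff ℝ 1 f) := hf.differentiable one_ne_zero
    rw [Psih_eq_vh15, scaledGrad_vh15 (hdiff hv) (hdiff hw₂) (hdiff hw₃) (ne_of_gt hh),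
      scaledGrad_vh15 (hdiff hγ) (hdiff hν₂) (hdiff hν₃) (ne_of_gt hh)]
  · rw [hA₀ p hp.1, (hR₀SO _ hp.1).2]
    exact one_ne_zero

theorem string_recovery_sequence_energy_limit
    (L : ℝ) (hL : 0 < L)
    (γ : ℝ → Fin 3 → ℝ) (hγ : ContDiff ℝ 2 γ)
    (harc : ∀ s ∈ Icc (0:ℝ) L, enorm3 (deriv γ s) = 1)
    (hγinj : InjOn γ (Icc (0:ℝ) L))
    (R₀ : ℝ → M3) (hR₀C1 : ∀ i j, ContDiff ℝ 1 fun s => R₀ s i j)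
    (hR₀SO : ∀ s ∈ Icc (0:ℝ) L, R₀ s ∈ SO3)
    (hR₀e1 : ∀ s ∈ Icc (0:ℝ) L, (R₀ s).mulVec (Pi.single 0 1) = deriv γ s)
    (Dset : Set (ℝ × ℝ)) (hDopen : IsOpen Dset) (hDconn : IsConnected Dset)
    (hDbdd : Bornology.IsBounded Dset) (hDvol : volume Dset = 1)
    (W : ℝ → M3 → ℝ) (hWnn : ∀ s F, 0 ≤ W s F)
    (hWmeas : ∀ F, Measurable fun s => W s F)
    (hWcont : ∀ᵐ s ∂(volume.restrict (Ioo (0:ℝ) L)), Continuous (W s))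
    (C₃ : ℝ) (hC₃ : 0 < C₃)
    (hWgrowth : ∀ᵐ s ∂(volume.restrict (Ioo (0:ℝ) L)),
      ∀ F : M3, W s F ≤ C₃ * distSO3 F ^ 2)
    (v w₂ w₃ : ℝ → Fin 3 → ℝ)
    (hv : ContDiff ℝ 1 v) (hw₂ : ContDiff ℝ 1 w₂) (hw₃ : ContDiff ℝ 1 w₃) :
    Filter.Tendsto
      (fun h : ℝ =>
        ∫ p in Ioo (0:ℝ) L ×ˢ Dset,
          W p.1 (scaledGrad h (vh15 v w₂ w₃ h) p * (scaledGrad h (Psih γ R₀ h) p)⁻¹) *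
            (scaledGrad h (Psih γ R₀ h) p).det)
      (nhdsWithin 0 (Ioi 0))
      (nhds (∫ s in Ioo (0:ℝ) L,
        W s (colMat (deriv v s) (w₂ s) (w₃ s) * (R₀ s).transpose))) := by
  have hWbound : ∀ᵐ s ∂volume.restrict (Ioo 0 L), ∀ F, |W s F| ≤ C₃ * distSO3 F ^ 2 :=
    hWgrowth.mono fun s hs F => (abs_of_nonneg (hWnn s F)).trans_le (hs F)
  simpa only [measureReal_def, hDvol, ENNReal.toReal_one, one_mul] using
    string_recovery_sequence_energy_limit_general (hγ.of_le one_le_two) hR₀C1 hR₀SO hR₀e1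
      hDopen.measurableSet hDbdd hWmeas hWcont
      (continuous_const.mul (continuous_distSO3.pow 2)) hWbound hv hw₂ hw₃
end
end

section
/- Let α ∈ [0,2), β ∈ (0, 2−α), s₀ ∈ (0,L), R₁, R₂ ∈ SO(3), and let P : [0,1] → SO(3) be a C¹ map with P(0) = R₁ and P(1) = R₂. For h > 0 small enough that s₀ + h^β < L, set ω(h) := h^β, P⁽ʰ⁾(s) := P((s − s₀)/ω(h)), and define v⁽ʰ⁾ : Ω → ℝ³ by: v⁽ʰ⁾(s,ξ,ζ) := R₁(s, hξ, hζ)ᵀ for s < s₀; v⁽ʰ⁾(s,ξ,ζ) := ∫_{s₀}^s P⁽ʰ⁾(σ)e₁ dσ + P⁽ʰ⁾(s)(0, hξ, hζ)ᵀ + b⁽ʰ⁾ for s₀ ≤ s ≤ s₀ + ω(h); and v⁽ʰ⁾(s,ξ,ζ) := R₂(s, hξ, hζ)ᵀ + d⁽ʰ⁾ for s > s₀ + ω(h), where b⁽ʰ⁾ := R₁(s₀,0,0)ᵀ and d⁽ʰ⁾ ∈ ℝ³ is the constant making v⁽ʰ⁾ continuous across s = s₀ + ω(h). Then (with the scaled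 gradient ∇_h v⁽ʰ⁾ defined at every point off the two interface planes) one has lim_{h→0⁺} h^{−α} ∫_Ω dist²( (∇_h v⁽ʰ⁾)(∇_hΨ⁽ʰ⁾)⁻¹, SO(3) ) ds dξ dζ = 0. -/
open MeasureTheory Set

noncomputable section

/-- The transition deformation used for intermediate scalings: rigid motion `R₁` for
`s < s₀`, a graft of the path `P` on `[s₀, s₀ + ω]`, and a rigid motion `R₂` afterwards,
with constants chosen so that the map is continuous. -/
def vh16 (R₁ R₂ : M3) (P : ℝ → M3) (s₀ ω h : ℝ) (p : ℝ × ℝ × ℝ) : Fin 3 → ℝ :=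
  if p.1 < s₀ then R₁.mulVec ![p.1, h * p.2.1, h * p.2.2]
  else if p.1 ≤ s₀ + ω then
    (∫ σ in s₀..p.1, (P ((σ - s₀) / ω)).mulVec (Pi.single 0 1)) +
      (P ((p.1 - s₀) / ω)).mulVec ![0, h * p.2.1, h * p.2.2] + R₁.mulVec ![s₀, 0, 0]
  else
    R₂.mulVec ![p.1, h * p.2.1, h * p.2.2] +
      ((∫ σ in s₀..(s₀ + ω), (P ((σ - s₀) / ω)).mulVec (Pi.single 0 1)) +
        R₁.mulVec ![s₀, 0, 0] - R₂.mulVec ![s₀ + ω, 0, 0])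

/-! The reference rod and each piece of the deformation map the cross-section at `s` by
`(s, ξ, ζ) ↦ c(s) + A(s)(0, hξ, hζ)ᵀ` with `A(s) ∈ SO(3)` and `c' = A e₁`, so their scaled gradients
are `A + (A'(0, hξ, hζ)ᵀ) ⊗ e₁`: rotations up to `O(h)`, respectively `O(h/ω)` in the transition
slab, where `P⁽ʰ⁾` varies at rate `1/ω`. Since the Frobenius norm is invariant under rotations, the
distance of `(Q + A)(R + B)⁻¹` to `SO(3)` is at most `2(‖A‖ + ‖B‖)` once `‖B‖ ≤ 1/2`. The energy
density is therefore `O(h²)`, plus `O(h²/ω²)` on a slab of width `ω`, and the energy is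
`O(h² + h²/ω)`; for `ω = h^β` with `β < 2 - α` this is `o(h^α)`. -/

open Filter Topology
open scoped Matrix Matrix.Norms.Frobenius

section FrobeniusNorm

variable {𝕜 m n : Type*} [RCLike 𝕜] [Fintype m] [Fintype n]

lemma frobenius_norm_sq_eq_trace (A : Matrix m n 𝕜) :
    ((‖A‖ ^ 2 : ℝ) : 𝕜) = (A * Aᴴ).trace := by
  have hsq : ‖A‖ ^ 2 = ∑ i, ∑ j, ‖A i j‖ ^ 2 := by
    simp only [Matrix.frobenius_norm_def, Real.rpow_two, ← Real.sqrt_eq_rpow]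
    exact Real.sq_sqrt (by positivity)
  simp [hsq, Matrix.trace, Matrix.mul_apply, RCLike.mul_conj]

variable [DecidableEq n]

lemma frobenius_norm_mul_of_mem_unitaryGroup (A : Matrix m n 𝕜) {U : Matrix n n 𝕜}
    (hU : U ∈ Matrix.unitaryGroup n 𝕜) : ‖A * U‖ = ‖A‖ := by
  have hUU : U * Uᴴ = 1 := Matrix.mem_unitaryGroup_iff.mp hU
  have htrace : (A * U * (A * U)ᴴ).trace = (A * Aᴴ).trace := by
    rw [Matrix.conjTranspose_mul, Matrix.mul_assoc, ← Matrix.mul_assoc U, hUU, Matrix.one_mul]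
  rw [← frobenius_norm_sq_eq_trace, ← frobenius_norm_sq_eq_trace] at htrace
  exact (pow_left_inj₀ (norm_nonneg _) (norm_nonneg _) two_ne_zero).mp (RCLike.ofReal_inj.mp htrace)

lemma frobenius_norm_mul_of_mem_unitaryGroup_left (A : Matrix n m 𝕜) {U : Matrix n n 𝕜}
    (hU : U ∈ Matrix.unitaryGroup n 𝕜) : ‖U * A‖ = ‖A‖ := by
  have hU' : Uᴴ ∈ Matrix.unitaryGroup n 𝕜 := Unitary.star_mem hU
  rw [← Matrix.frobenius_norm_conjTranspose, Matrix.conjTranspose_mul,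
    frobenius_norm_mul_of_mem_unitaryGroup _ hU', Matrix.frobenius_norm_conjTranspose]

lemma isUnit_add_of_mem_unitaryGroup {R B : Matrix n n 𝕜} (hR : R ∈ Matrix.unitaryGroup n 𝕜)
    (hB : ‖B‖ < 1) : IsUnit (R + B) := by
  have : CompleteSpace (Matrix n n 𝕜) := FiniteDimensional.complete 𝕜 _
  have hRR : R * star R = 1 := Matrix.mem_unitaryGroup_iff.mp hR
  have hnorm : ‖-(star R * B)‖ < 1 := by
    rwa [norm_neg, frobenius_norm_mul_of_mem_unitaryGroup_left _ (Unitary.star_mem hR)]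
  have hfactor : R * (1 - -(star R * B)) = R + B := by
    rw [sub_neg_eq_add, mul_add, mul_one, ← mul_assoc, hRR, one_mul]
  exact hfactor ▸ (IsUnit.of_mul_eq_one _ hRR).mul (isUnit_one_sub_of_norm_lt_one hnorm)

-- The difference `X` satisfies `X * R = A - Q * star R * B - X * B`, and `‖X * R‖ = ‖X‖`.
lemma frobenius_norm_add_mul_inv_sub_le {Q R A B : Matrix n n 𝕜}
    (hQ : Q ∈ Matrix.unitaryGroup n 𝕜) (hR : R ∈ Matrix.unitaryGroup n 𝕜) (hB : ‖B‖ ≤ 1 / 2) :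
    ‖(Q + A) * (R + B)⁻¹ - Q * star R‖ ≤ 2 * (‖A‖ + ‖B‖) := by
  set X := (Q + A) * (R + B)⁻¹ - Q * star R with hX
  have hRR : star R * R = 1 := Matrix.mem_unitaryGroup_iff'.mp hR
  have hdet : IsUnit (R + B).det :=
    (Matrix.isUnit_iff_isUnit_det _).mp (isUnit_add_of_mem_unitaryGroup hR (by linarith))
  have hXR : X * R = A - Q * star R * B - X * B := by
    have hcancel : X * (R + B) = Q + A - Q * star R * (R + B) := by
      rw [hX, sub_mul, mul_assoc (Q + A), Matrix.nonsing_inv_mul _ hdet, mul_one]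
    calc X * R = X * (R + B) - X * B := by rw [mul_add, add_sub_cancel_right]
      _ = A - Q * star R * B - X * B := by
          rw [hcancel, mul_add, mul_assoc Q, hRR, mul_one, add_sub_add_left_eq_sub]
  have hle : ‖X‖ ≤ ‖A‖ + ‖B‖ + ‖X‖ * (1 / 2) :=
    calc ‖X‖ = ‖A - Q * star R * B - X * B‖ := by
          rw [← hXR, frobenius_norm_mul_of_mem_unitaryGroup X hR]
      _ ≤ ‖A‖ + ‖Q * star R * B‖ + ‖X * B‖ :=
          (norm_sub_le _ _).trans (add_le_add_left (norm_sub_le _ _) _)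
      _ ≤ ‖A‖ + ‖B‖ + ‖X‖ * (1 / 2) := by
          rw [frobenius_norm_mul_of_mem_unitaryGroup_left B
            (mul_mem hQ (Unitary.star_mem hR))]
          gcongr
          exact (norm_mul_le X B).trans (by gcongr)
  linarith

end FrobeniusNorm

lemma frob3_eq_norm (F : M3) : frob3 F = ‖F‖ := by
  simp [frob3, Matrix.frobenius_norm_def, Real.sqrt_eq_rpow]

lemma SO3_subset_unitaryGroup : SO3 ⊆ Matrix.unitaryGroup (Fin 3) ℝ := fun R hR =>
  Matrix.mem_unitaryGroup_iff'.mpr <| by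
    rw [Matrix.star_eq_conjTranspose, Matrix.conjTranspose_eq_transpose_of_trivial, hR.1]

lemma mul_star_mem_SO3 {Q R : M3} (hQ : Q ∈ SO3) (hR : R ∈ SO3) : Q * star R ∈ SO3 := by
  refine ⟨?_, ?_⟩
  · have h := mul_mem (SO3_subset_unitaryGroup hQ) (Unitary.star_mem (SO3_subset_unitaryGroup hR))
    simpa [Matrix.star_eq_conjTranspose] using Matrix.mem_unitaryGroup_iff'.mp h
  · simp [Matrix.star_eq_conjTranspose, hQ.2, hR.2]

lemma distSO3_nonneg (F : M3) : 0 ≤ distSO3 F :=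
  Real.sInf_nonneg <| forall_mem_image.mpr fun _ _ => Real.sqrt_nonneg _

lemma distSO3_le_norm_sub (F : M3) {Q : M3} (hQ : Q ∈ SO3) : distSO3 F ≤ ‖F - Q‖ :=
  frob3_eq_norm (F - Q) ▸ csInf_le
    ⟨0, forall_mem_image.mpr fun _ _ => Real.sqrt_nonneg _⟩ (mem_image_of_mem _ hQ)

lemma norm_tensE1 (a : Fin 3 → ℝ) : ‖tensE1 a‖ = enorm3 a := by
  simp [← frob3_eq_norm, frob3, enorm3, tensE1, Fin.sum_univ_three]

lemma mul_tensE1 (A : M3) (a : Fin 3 → ℝ) : A * tensE1 a = tensE1 (A *ᵥ a) := by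
  ext i j
  by_cases hj : j = 0 <;> simp [tensE1, Matrix.mul_apply, Matrix.mulVec, dotProduct, hj]

lemma norm_tensE1_mulVec_le (A : M3) (a : Fin 3 → ℝ) : ‖tensE1 (A *ᵥ a)‖ ≤ ‖A‖ * enorm3 a := by
  rw [← mul_tensE1, ← norm_tensE1]
  exact norm_mul_le _ _

lemma distSO3_mul_inv_le {Q R E F : M3} (hQ : Q ∈ SO3) (hR : R ∈ SO3) {v : Fin 3 → ℝ}
    (hF : ‖F‖ * enorm3 v ≤ 1 / 2) :
    distSO3 ((Q + tensE1 (E *ᵥ v)) * (R + tensE1 (F *ᵥ v))⁻¹) ≤ 2 * ((‖E‖ + ‖F‖) * enorm3 v) :=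
  calc _ ≤ ‖(Q + tensE1 (E *ᵥ v)) * (R + tensE1 (F *ᵥ v))⁻¹ - Q * star R‖ :=
        distSO3_le_norm_sub _ (mul_star_mem_SO3 hQ hR)
    _ ≤ 2 * (‖tensE1 (E *ᵥ v)‖ + ‖tensE1 (F *ᵥ v)‖) :=
        frobenius_norm_add_mul_inv_sub_le (SO3_subset_unitaryGroup hQ)
          (SO3_subset_unitaryGroup hR) ((norm_tensE1_mulVec_le F v).trans hF)
    _ ≤ 2 * ((‖E‖ + ‖F‖) * enorm3 v) := by
        rw [add_mul]
        gcongr <;> exact norm_tensE1_mulVec_le _ _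

/-- The derivative of a path of matrices, taken entry by entry, which keeps it independent of the
choice of a matrix norm. -/
def entrywiseDeriv {m n : Type*} (A : ℝ → Matrix m n ℝ) (s : ℝ) : Matrix m n ℝ :=
  Matrix.of fun i j => deriv (fun t => A t i j) s

lemma exists_norm_entrywiseDeriv_le {m n : Type*} [Fintype m] [Fintype n] {A : ℝ → Matrix m n ℝ}
    (hA : ∀ i j, ContDiff ℝ 1 fun t => A t i j) (a b : ℝ) :
    ∃ M, ∀ s ∈ Icc a b, ‖entrywiseDeriv A s‖ ≤ M := by
  have hcont : Continuous (entrywiseDeriv A) :=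
    continuous_matrix fun i j => (hA i j).continuous_deriv le_rfl
  exact isCompact_Icc.exists_bound_of_continuousOn hcont.continuousOn

lemma scaledGrad_congr {h : ℝ} {z w : ℝ × ℝ × ℝ → Fin 3 → ℝ} {p : ℝ × ℝ × ℝ} (hzw : z =ᶠ[𝓝 p] w) :
    scaledGrad h z p = scaledGrad h w p := by
  have hderiv (g : ℝ → ℝ × ℝ × ℝ) (t : ℝ) (hg : Continuous g) (hgt : g t = p) (i : Fin 3) :
      deriv (fun τ => z (g τ) i) t = deriv (fun τ => w (g τ) i) t := by
    have hgp : Tendsto g (𝓝 t) (𝓝 p) := hgt ▸ hg.tendsto t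
    exact EventuallyEq.deriv_eq ((hgp.eventually hzw).mono fun τ hτ => congrFun hτ i)
  ext i j
  simp only [scaledGrad, Matrix.of_apply,
    hderiv (fun t => (t, p.2.1, p.2.2)) p.1 (by fun_prop) rfl,
    hderiv (fun t => (p.1, t, p.2.2)) p.2.1 (by fun_prop) rfl,
    hderiv (fun t => (p.1, p.2.1, t)) p.2.2 (by fun_prop) rfl]

/-- The map `(s, ξ, ζ) ↦ c(s) + A(s)(0, hξ, hζ)ᵀ`, which places the cross-section at `s` in the
plane through `c(s)` spanned by the last two columns of `A(s)`. Both the reference rod `Ψ⁽ʰ⁾` and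
each of the three pieces of `v⁽ʰ⁾` are of this form. -/
def rodMap (c : ℝ → Fin 3 → ℝ) (A : ℝ → M3) (h : ℝ) (p : ℝ × ℝ × ℝ) : Fin 3 → ℝ :=
  c p.1 + A p.1 *ᵥ ![0, h * p.2.1, h * p.2.2]

lemma Psih_eq_rodMap (γ : ℝ → Fin 3 → ℝ) (R₀ : ℝ → M3) (h : ℝ) : Psih γ R₀ h = rodMap γ R₀ h := by
  ext p i
  simp only [Psih, nu2, nu3, rodMap, Matrix.mulVec_single, MulOpposite.op_one, one_smul,
    Pi.add_apply, Pi.smul_apply, Matrix.col_apply, smul_eq_mul, Matrix.mulVec, dotProduct,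
    Fin.sum_univ_three, Matrix.cons_val]
  ring

lemma scaledGrad_rodMap {c : ℝ → Fin 3 → ℝ} {A : ℝ → M3} {A' : M3} {h s : ℝ} (hh : h ≠ 0)
    (hc : HasDerivAt c (A s *ᵥ Pi.single 0 1) s)
    (hA : ∀ i j, HasDerivAt (fun t => A t i j) (A' i j) s) (q : ℝ × ℝ) :
    scaledGrad h (rodMap c A h) (s, q) = A s + tensE1 (A' *ᵥ ![0, h * q.1, h * q.2]) := by
  have hrod (t x y : ℝ) (i : Fin 3) :
      rodMap c A h (t, x, y) i = c t i + (A t i 1 * (h * x) + A t i 2 * (h * y)) := by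
    simp [rodMap, Matrix.mulVec, dotProduct, Fin.sum_univ_three]
  ext i j
  have h0 : HasDerivAt (fun t => rodMap c A h (t, q.1, q.2) i)
      (A s i 0 + (A' i 1 * (h * q.1) + A' i 2 * (h * q.2))) s := by
    simp only [hrod]
    have hci : HasDerivAt (fun t => c t i) (A s i 0) s := by simpa using hasDerivAt_pi.mp hc i
    exact hci.add (((hA i 1).mul_const _).add ((hA i 2).mul_const _))
  have h1 : HasDerivAt (fun t => rodMap c A h (s, t, q.2) i) (A s i 1 * (h * 1)) q.1 := by
    simp only [hrod]
    exact ((((hasDerivAt_id q.1).const_mul h).const_mul _).add_const _).const_add _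
  have h2 : HasDerivAt (fun t => rodMap c A h (s, q.1, t) i) (A s i 2 * (h * 1)) q.2 := by
    simp only [hrod]
    exact ((((hasDerivAt_id q.2).const_mul h).const_mul _).const_add _).const_add _
  fin_cases j
  · simp [scaledGrad, h0.deriv, tensE1, Matrix.mulVec, dotProduct, Fin.sum_univ_three]
  · simp only [scaledGrad, tensE1, Fin.mk_one, Matrix.add_apply, Matrix.of_apply, one_ne_zero,
      if_false, if_true, h1.deriv, add_zero]
    field_simp
  · simp only [scaledGrad, tensE1, Fin.reduceFinMk, Matrix.add_apply, Matrix.of_apply,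
      Fin.reduceEq, if_false, h2.deriv, add_zero]
    field_simp

lemma enorm3_crossSection_le (h : ℝ) (q : ℝ × ℝ) :
    enorm3 ![0, h * q.1, h * q.2] ≤ 2 * (|h| * ‖q‖) := by
  have hx : q.1 ^ 2 ≤ ‖q‖ ^ 2 := sq_le_sq.mpr ((norm_fst_le q).trans (le_abs_self _))
  have hy : q.2 ^ 2 ≤ ‖q‖ ^ 2 := sq_le_sq.mpr ((norm_snd_le q).trans (le_abs_self _))
  refine Real.sqrt_le_iff.mpr ⟨by positivity, ?_⟩
  calc ∑ i, ![0, h * q.1, h * q.2] i ^ 2 = h ^ 2 * (q.1 ^ 2 + q.2 ^ 2) := by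
        simp only [Fin.sum_univ_three, Matrix.cons_val]
        ring
    _ ≤ h ^ 2 * (‖q‖ ^ 2 + ‖q‖ ^ 2) := by gcongr
    _ ≤ (2 * (|h| * ‖q‖)) ^ 2 := by
        rw [mul_pow, mul_pow, sq_abs]
        nlinarith [mul_nonneg (sq_nonneg h) (sq_nonneg ‖q‖)]

section Transition

variable {R₁ R₂ : M3} {P : ℝ → M3} {s₀ ω h s : ℝ}

lemma hasDerivAt_mulVec_axis (A : M3) (s : ℝ) :
    HasDerivAt (fun t => A *ᵥ ![t, 0, 0]) (A *ᵥ Pi.single 0 1) s :=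
  hasDerivAt_pi.mpr fun i => by
    simpa [Matrix.mulVec, dotProduct, Fin.sum_univ_three] using
      (hasDerivAt_id s).const_mul (A i 0)

lemma scaledGrad_rigid (A : M3) (d : Fin 3 → ℝ) (hh : h ≠ 0) (p : ℝ × ℝ × ℝ) :
    scaledGrad h (fun p => A *ᵥ ![p.1, h * p.2.1, h * p.2.2] + d) p = A := by
  have hrod : (fun p : ℝ × ℝ × ℝ => A *ᵥ ![p.1, h * p.2.1, h * p.2.2] + d) =
      rodMap (fun t => A *ᵥ ![t, 0, 0] + d) (fun _ => A) h := by
    ext p i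
    simp only [rodMap, Matrix.mulVec, dotProduct, Fin.sum_univ_three, Pi.add_apply,
      Matrix.cons_val]
    ring
  have hgrad := scaledGrad_rodMap (A' := 0) hh ((hasDerivAt_mulVec_axis A p.1).add_const d)
    (fun i j => hasDerivAt_const p.1 (A i j)) p.2
  have hzero : tensE1 0 = 0 := by ext; simp [tensE1]
  rwa [Matrix.zero_mulVec, hzero, add_zero, ← hrod] at hgrad

lemma scaledGrad_vh16_of_lt (hh : h ≠ 0) (hs : s < s₀) (q : ℝ × ℝ) :
    scaledGrad h (vh16 R₁ R₂ P s₀ ω h) (s, q) = R₁ := by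
  refine (scaledGrad_congr ?_).trans (scaledGrad_rigid R₁ 0 hh (s, q))
  filter_upwards [continuousAt_fst.eventually (Iio_mem_nhds hs)] with p (hp : p.1 < s₀)
  simp only [vh16, hp, if_true, add_zero]

lemma scaledGrad_vh16_of_gt (hω : 0 ≤ ω) (hh : h ≠ 0) (hs : s₀ + ω < s) (q : ℝ × ℝ) :
    scaledGrad h (vh16 R₁ R₂ P s₀ ω h) (s, q) = R₂ := by
  refine (scaledGrad_congr ?_).trans
    (scaledGrad_rigid R₂ ((∫ σ in s₀..(s₀ + ω), P ((σ - s₀) / ω) *ᵥ Pi.single 0 1) +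
      R₁ *ᵥ ![s₀, 0, 0] - R₂ *ᵥ ![s₀ + ω, 0, 0]) hh (s, q))
  filter_upwards [continuousAt_fst.eventually (Ioi_mem_nhds hs)] with p (hp : s₀ + ω < p.1)
  simp only [vh16, not_lt.mpr (show s₀ ≤ p.1 by linarith), not_le.mpr hp, if_false]

lemma scaledGrad_vh16_of_mem_Ioo (hP : ∀ i j, Differentiable ℝ fun t => P t i j) (hh : h ≠ 0)
    (hs : s ∈ Ioo s₀ (s₀ + ω)) (q : ℝ × ℝ) :
    scaledGrad h (vh16 R₁ R₂ P s₀ ω h) (s, q) = P ((s - s₀) / ω) +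
      tensE1 ((ω⁻¹ • entrywiseDeriv P ((s - s₀) / ω)) *ᵥ ![0, h * q.1, h * q.2]) := by
  let A : ℝ → M3 := fun t => P ((t - s₀) / ω)
  have hA (i j : Fin 3) :
      HasDerivAt (fun t => A t i j) ((ω⁻¹ • entrywiseDeriv P ((s - s₀) / ω)) i j) s := by
    have hrescale : HasDerivAt (fun t => (t - s₀) / ω) (1 / ω) s :=
      ((hasDerivAt_id s).sub_const s₀).div_const ω
    refine ((hP i j _).hasDerivAt.comp s hrescale).congr_deriv ?_
    simp [entrywiseDeriv, mul_comm]
  have hcont : Continuous fun t => A t *ᵥ Pi.single 0 1 := by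
    refine continuous_pi fun i => ?_
    simpa [A, Function.comp_def] using
      (hP i 0).continuous.comp (by fun_prop : Continuous fun t => (t - s₀) / ω)
  have hc : HasDerivAt (fun t => (∫ σ in s₀..t, A σ *ᵥ Pi.single 0 1) + R₁ *ᵥ ![s₀, 0, 0])
      (A s *ᵥ Pi.single 0 1) s :=
    (intervalIntegral.integral_hasDerivAt_right (hcont.intervalIntegrable s₀ s)
      (hcont.stronglyMeasurableAtFilter _ _) hcont.continuousAt).add_const _
  refine (scaledGrad_congr ?_).trans (scaledGrad_rodMap hh hc hA q)
  filter_upwards [continuousAt_fst.eventually (Ioo_mem_nhds hs.1 hs.2)] with p hp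
  simp only [vh16, rodMap, not_lt.mpr hp.1.le, hp.2.le, if_true, if_false]
  exact add_right_comm _ _ _

lemma exists_scaledGrad_vh16_eq {N : ℝ} (hR₁ : R₁ ∈ SO3) (hR₂ : R₂ ∈ SO3)
    (hP : ∀ i j, Differentiable ℝ fun t => P t i j) (hPSO : ∀ t ∈ Icc (0 : ℝ) 1, P t ∈ SO3)
    (hN : ∀ t ∈ Icc (0 : ℝ) 1, ‖entrywiseDeriv P t‖ ≤ N) (hω : 0 < ω) (hh : h ≠ 0)
    (hs : s ≠ s₀) (hs' : s ≠ s₀ + ω) (q : ℝ × ℝ) :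
    ∃ Q ∈ SO3, ∃ E : M3,
      scaledGrad h (vh16 R₁ R₂ P s₀ ω h) (s, q) = Q + tensE1 (E *ᵥ ![0, h * q.1, h * q.2]) ∧
      ‖E‖ ^ 2 ≤ (Icc s₀ (s₀ + ω)).indicator (fun _ => (N / ω) ^ 2) s := by
  have hrigid (Q : M3) : Q = Q + tensE1 ((0 : M3) *ᵥ ![0, h * q.1, h * q.2]) := by
    ext; simp [tensE1]
  have hnonneg : ‖(0 : M3)‖ ^ 2 ≤ (Icc s₀ (s₀ + ω)).indicator (fun _ => (N / ω) ^ 2) s := by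
    simpa using indicator_nonneg (fun _ _ => sq_nonneg (N / ω)) s
  rcases hs.lt_or_gt with hlt | hgt
  · exact ⟨R₁, hR₁, 0, (scaledGrad_vh16_of_lt hh hlt q).trans (hrigid R₁), hnonneg⟩
  rcases hs'.lt_or_gt with hlt' | hgt'
  · have ht : (s - s₀) / ω ∈ Icc (0 : ℝ) 1 :=
      ⟨div_nonneg (by linarith) hω.le, (div_le_one hω).mpr (by linarith)⟩
    refine ⟨_, hPSO _ ht, _, scaledGrad_vh16_of_mem_Ioo hP hh ⟨hgt, hlt'⟩ q, ?_⟩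
    rw [indicator_of_mem (show s ∈ Icc s₀ (s₀ + ω) from ⟨hgt.le, hlt'.le⟩), norm_smul, norm_inv,
      Real.norm_of_nonneg hω.le, inv_mul_eq_div]
    gcongr
    exact hN _ ht
  · exact ⟨R₂, hR₂, 0, (scaledGrad_vh16_of_gt hω.le hh hgt' q).trans (hrigid R₂), hnonneg⟩

end Transition

section Energy

/-- The stored energy density `dist²((∇_h z)(∇_h Ψ)⁻¹, SO(3))` of the deformation `z` of a body with
reference parametrization `Ψ`. -/
def energyDensity (h : ℝ) (Ψ z : ℝ × ℝ × ℝ → Fin 3 → ℝ) (p : ℝ × ℝ × ℝ) : ℝ :=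
  distSO3 (scaledGrad h z p * (scaledGrad h Ψ p)⁻¹) ^ 2

lemma setIntegral_prod_le_of_ae_le_fst {X Y : Type*} [MeasurableSpace X] [MeasurableSpace Y]
    {μ : Measure X} {ν : Measure Y} [SFinite μ] [SFinite ν] {S : Set X} {D : Set Y} {f : X × Y → ℝ}
    {g : X → ℝ} (hD : MeasurableSet D) (hDfin : ν D ≠ ⊤) (hf : ∀ p, 0 ≤ f p)
    (hg : IntegrableOn g S μ)
    (hfg : ∀ᵐ x ∂μ.restrict S, ∀ y ∈ D, f (x, y) ≤ g x) :
    ∫ p in S ×ˢ D, f p ∂μ.prod ν ≤ ν.real D * ∫ x in S, g x ∂μ := by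
  have : IsFiniteMeasure (ν.restrict D) := isFiniteMeasure_restrict.mpr hDfin
  have hle : ∀ᵐ p ∂(μ.restrict S).prod (ν.restrict D), f p ≤ g p.1 := by
    filter_upwards [Measure.quasiMeasurePreserving_fst.ae hfg,
      Measure.quasiMeasurePreserving_snd.ae (ae_restrict_mem hD)] with p hp hpD using hp p.2 hpD
  rw [← Measure.prod_restrict]
  refine (integral_mono_of_nonneg (.of_forall hf) (hg.comp_fst _) hle).trans_eq ?_
  rw [integral_fun_fst, measureReal_restrict_apply_univ, smul_eq_mul]

lemma setIntegral_add_indicator_const_le {X : Type*} [MeasurableSpace X] {μ : Measure X}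
    {S T : Set X} (hS : μ S ≠ ⊤) (hT : MeasurableSet T) (hTfin : μ T ≠ ⊤) (a : ℝ) {b : ℝ}
    (hb : 0 ≤ b) :
    ∫ x in S, (a + T.indicator (fun _ => b) x) ∂μ ≤ μ.real S * a + μ.real T * b := by
  have : IsFiniteMeasure (μ.restrict S) := isFiniteMeasure_restrict.mpr hS
  rw [integral_add (integrable_const a) ((integrable_const b).indicator hT), integral_const,
    integral_indicator_const b hT, measureReal_restrict_apply_univ, smul_eq_mul, smul_eq_mul,
    measureReal_restrict_apply hT]
  gcongr
  exact inter_subset_left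

variable {L : ℝ} {γ : ℝ → Fin 3 → ℝ} {R₀ : ℝ → M3} {D : Set (ℝ × ℝ)} {s₀ : ℝ} {R₁ R₂ : M3}
  {P : ℝ → M3}

lemma energyDensity_vh16_le {M N ρ ω h s : ℝ} {q : ℝ × ℝ}
    (hγ : HasDerivAt γ (R₀ s *ᵥ Pi.single 0 1) s)
    (hR₀ : ∀ i j, DifferentiableAt ℝ (fun t => R₀ t i j) s) (hR₀SO : R₀ s ∈ SO3)
    (hM : ‖entrywiseDeriv R₀ s‖ ≤ M) (hR₁ : R₁ ∈ SO3) (hR₂ : R₂ ∈ SO3)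
    (hP : ∀ i j, Differentiable ℝ fun t => P t i j) (hPSO : ∀ t ∈ Icc (0 : ℝ) 1, P t ∈ SO3)
    (hN : ∀ t ∈ Icc (0 : ℝ) 1, ‖entrywiseDeriv P t‖ ≤ N) (hω : 0 < ω) (hh : 0 < h)
    (hs : s ≠ s₀) (hs' : s ≠ s₀ + ω) (hq : ‖q‖ ≤ ρ) (hsmall : M * (2 * (h * ρ)) ≤ 1 / 2) :
    energyDensity h (Psih γ R₀ h) (vh16 R₁ R₂ P s₀ ω h) (s, q) ≤
      32 * (h * ρ) ^ 2 * (M ^ 2 + (Icc s₀ (s₀ + ω)).indicator (fun _ => (N / ω) ^ 2) s) := by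
  obtain ⟨Q, hQ, E, hgrad, hE⟩ :=
    exists_scaledGrad_vh16_eq hR₁ hR₂ hP hPSO hN hω hh.ne' hs hs' q
  set F := entrywiseDeriv R₀ s
  set v := ![0, h * q.1, h * q.2]
  have hv0 : 0 ≤ enorm3 v := Real.sqrt_nonneg _
  have hv : enorm3 v ≤ 2 * (h * ρ) := by
    refine (enorm3_crossSection_le h q).trans ?_
    rw [abs_of_pos hh]
    gcongr
  have hF : ‖F‖ * enorm3 v ≤ 1 / 2 :=
    (mul_le_mul hM hv hv0 ((norm_nonneg F).trans hM)).trans hsmall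
  have hgradΨ : scaledGrad h (Psih γ R₀ h) (s, q) = R₀ s + tensE1 (F *ᵥ v) :=
    Psih_eq_rodMap γ R₀ h ▸ scaledGrad_rodMap hh.ne' hγ (fun i j => (hR₀ i j).hasDerivAt) q
  rw [energyDensity, hgrad, hgradΨ]
  calc _ ≤ (2 * ((‖E‖ + ‖F‖) * enorm3 v)) ^ 2 :=
        pow_le_pow_left₀ (distSO3_nonneg _) (distSO3_mul_inv_le hQ hR₀SO hF) 2
    _ = 4 * enorm3 v ^ 2 * (‖E‖ + ‖F‖) ^ 2 := by ring
    _ ≤ 4 * (2 * (h * ρ)) ^ 2 * (2 * (‖E‖ ^ 2 + ‖F‖ ^ 2)) := by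
        gcongr
        exact add_sq_le
    _ ≤ 4 * (2 * (h * ρ)) ^ 2 * (2 * ((Icc s₀ (s₀ + ω)).indicator (fun _ => (N / ω) ^ 2) s +
          M ^ 2)) := by gcongr
    _ = _ := by ring

lemma setIntegral_energyDensity_vh16_le {M N ρ ω h : ℝ}
    (hγ : ∀ s ∈ Ioo 0 L, HasDerivAt γ (R₀ s *ᵥ Pi.single 0 1) s)
    (hR₀ : ∀ i j, DifferentiableOn ℝ (fun s => R₀ s i j) (Ioo 0 L))
    (hR₀SO : ∀ s ∈ Ioo 0 L, R₀ s ∈ SO3) (hM : ∀ s ∈ Ioo 0 L, ‖entrywiseDeriv R₀ s‖ ≤ M)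
    (hD : MeasurableSet D) (hρ : ∀ q ∈ D, ‖q‖ ≤ ρ) (hR₁ : R₁ ∈ SO3) (hR₂ : R₂ ∈ SO3)
    (hP : ∀ i j, Differentiable ℝ fun t => P t i j) (hPSO : ∀ t ∈ Icc (0 : ℝ) 1, P t ∈ SO3)
    (hN : ∀ t ∈ Icc (0 : ℝ) 1, ‖entrywiseDeriv P t‖ ≤ N) (hω : 0 < ω) (hh : 0 < h)
    (hsmall : M * (2 * (h * ρ)) ≤ 1 / 2) :
    ∫ p in Ioo 0 L ×ˢ D, energyDensity h (Psih γ R₀ h) (vh16 R₁ R₂ P s₀ ω h) p ≤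
      volume.real D * (32 * (h * ρ) ^ 2 *
        (volume.real (Ioo 0 L) * M ^ 2 + ω * (N / ω) ^ 2)) := by
  have hDfin : volume D ≠ ⊤ := (isBounded_iff_forall_norm_le.mpr ⟨ρ, hρ⟩).measure_lt_top.ne
  have hdensity : ∀ᵐ s ∂volume.restrict (Ioo 0 L), ∀ q ∈ D,
      energyDensity h (Psih γ R₀ h) (vh16 R₁ R₂ P s₀ ω h) (s, q) ≤ 32 * (h * ρ) ^ 2 *
        (M ^ 2 + (Icc s₀ (s₀ + ω)).indicator (fun _ => (N / ω) ^ 2) s) := by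
    filter_upwards [ae_restrict_mem measurableSet_Ioo, ae_restrict_of_ae (volume.ae_ne s₀),
      ae_restrict_of_ae (volume.ae_ne (s₀ + ω))] with s hs hs₀ hsω q hq
    exact energyDensity_vh16_le (hγ s hs)
      (fun i j => (hR₀ i j).differentiableAt (isOpen_Ioo.mem_nhds hs)) (hR₀SO s hs) (hM s hs)
      hR₁ hR₂ hP hPSO hN hω hh hs₀ hsω (hρ q hq) hsmall
  have hint : IntegrableOn (fun s => 32 * (h * ρ) ^ 2 *
      (M ^ 2 + (Icc s₀ (s₀ + ω)).indicator (fun _ => (N / ω) ^ 2) s)) (Ioo 0 L) :=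
    ((integrable_const _).add ((integrable_const _).indicator measurableSet_Icc)).const_mul _
  refine (setIntegral_prod_le_of_ae_le_fst hD hDfin (fun _ => sq_nonneg _) hint hdensity).trans ?_
  have hslab := setIntegral_add_indicator_const_le (μ := volume) (S := Ioo 0 L)
    measure_Ioo_lt_top.ne (measurableSet_Icc (a := s₀) (b := s₀ + ω))
    measure_Icc_lt_top.ne (M ^ 2) (sq_nonneg (N / ω))
  rw [Real.volume_real_Icc_of_le (by linarith), add_sub_cancel_left] at hslab
  rw [integral_const_mul]
  gcongr

lemma exists_eventually_setIntegral_energyDensity_vh16_le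
    (hγ : ∀ s ∈ Ioo 0 L, HasDerivAt γ (R₀ s *ᵥ Pi.single 0 1) s)
    (hR₀ : ∀ i j, ContDiff ℝ 1 fun s => R₀ s i j) (hR₀SO : ∀ s ∈ Ioo 0 L, R₀ s ∈ SO3)
    (hD : MeasurableSet D) (hDbdd : Bornology.IsBounded D) (hR₁ : R₁ ∈ SO3) (hR₂ : R₂ ∈ SO3)
    (hP : ∀ i j, ContDiff ℝ 1 fun t => P t i j) (hPSO : ∀ t ∈ Icc (0 : ℝ) 1, P t ∈ SO3) :
    ∃ K, ∀ᶠ h in 𝓝[>] (0 : ℝ), ∀ ω > 0,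
      ∫ p in Ioo 0 L ×ˢ D, energyDensity h (Psih γ R₀ h) (vh16 R₁ R₂ P s₀ ω h) p ≤
        K * (h ^ 2 + h ^ 2 / ω) := by
  obtain ⟨M, hM⟩ := exists_norm_entrywiseDeriv_le hR₀ 0 L
  obtain ⟨N, hN⟩ := exists_norm_entrywiseDeriv_le hP 0 1
  obtain ⟨ρ, hρ⟩ := hDbdd.exists_norm_le
  set V := volume.real D
  set ℓ := volume.real (Ioo 0 L)
  have hsmall : ∀ᶠ h in 𝓝[>] (0 : ℝ), M * (2 * (h * ρ)) ≤ 1 / 2 := by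
    have hlim : Tendsto (fun h : ℝ => M * (2 * (h * ρ))) (𝓝 0) (𝓝 (M * (2 * (0 * ρ)))) :=
      Continuous.tendsto (by fun_prop) 0
    refine nhdsWithin_le_nhds (hlim.eventually_le_const ?_)
    norm_num
  refine ⟨V * (32 * ρ ^ 2 * (ℓ * M ^ 2 + N ^ 2)), ?_⟩
  filter_upwards [self_mem_nhdsWithin, hsmall] with h (hh : 0 < h) hMh ω hω
  calc ∫ p in Ioo 0 L ×ˢ D, energyDensity h (Psih γ R₀ h) (vh16 R₁ R₂ P s₀ ω h) p
      ≤ V * (32 * (h * ρ) ^ 2 * (ℓ * M ^ 2 + ω * (N / ω) ^ 2)) :=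
        setIntegral_energyDensity_vh16_le hγ
          (fun i j => ((hR₀ i j).differentiable one_ne_zero).differentiableOn) hR₀SO
          (fun s hs => hM s (Ioo_subset_Icc_self hs)) hD hρ hR₁ hR₂
          (fun i j => (hP i j).differentiable one_ne_zero) hPSO hN hω hh hMh
    _ = V * (32 * ρ ^ 2) * (ℓ * M ^ 2 * h ^ 2 + N ^ 2 * (h ^ 2 / ω)) := by
        field_simp
    _ ≤ V * (32 * ρ ^ 2) * ((ℓ * M ^ 2 + N ^ 2) * (h ^ 2 + h ^ 2 / ω)) := by
        have hℓ : 0 ≤ ℓ := measureReal_nonneg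
        gcongr
        nlinarith [mul_nonneg (mul_nonneg hℓ (sq_nonneg M)) (div_nonneg (sq_nonneg h) hω.le),
          mul_nonneg (sq_nonneg N) (sq_nonneg h)]
    _ = _ := by ring

end Energy

lemma tendsto_rpow_neg_mul_sq_add_div_rpow {α β : ℝ} (hα : α < 2) (hβ : β < 2 - α) (K : ℝ) :
    Tendsto (fun h : ℝ => h ^ (-α) * (K * (h ^ 2 + h ^ 2 / h ^ β))) (𝓝[>] 0) (𝓝 0) := by
  have hpow {e : ℝ} (he : 0 < e) : Tendsto (fun h : ℝ => h ^ e) (𝓝[>] 0) (𝓝 0) := by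
    have h := (Real.continuousAt_rpow_const 0 e (Or.inr he.le)).tendsto
    rw [Real.zero_rpow he.ne'] at h
    exact h.mono_left nhdsWithin_le_nhds
  have hlim : Tendsto (fun h : ℝ => K * (h ^ (2 - α) + h ^ (2 - α - β))) (𝓝[>] 0) (𝓝 0) := by
    simpa using ((hpow (sub_pos.mpr hα)).add (hpow (sub_pos.mpr hβ))).const_mul K
  refine hlim.congr' ?_
  filter_upwards [self_mem_nhdsWithin] with h (hh : 0 < h)
  rw [Real.rpow_sub hh (2 - α), Real.rpow_sub hh 2, Real.rpow_neg hh.le, Real.rpow_two]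
  field_simp

theorem intermediate_scaling_transition_energy_vanishes_general {L : ℝ} {γ : ℝ → Fin 3 → ℝ}
    {R₀ : ℝ → M3} {D : Set (ℝ × ℝ)} {P : ℝ → M3}
    (hγ : ∀ s ∈ Ioo 0 L, HasDerivAt γ (R₀ s *ᵥ Pi.single 0 1) s)
    (hR₀ : ∀ i j, ContDiff ℝ 1 fun s => R₀ s i j) (hR₀SO : ∀ s ∈ Ioo 0 L, R₀ s ∈ SO3)
    (hD : MeasurableSet D) (hDbdd : Bornology.IsBounded D)
    (hP : ∀ i j, ContDiff ℝ 1 fun t => P t i j) (hPSO : ∀ t ∈ Icc (0 : ℝ) 1, P t ∈ SO3)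
    {α β : ℝ} (hα : α < 2) (hβ : β < 2 - α) (s₀ : ℝ) :
    Tendsto
      (fun h : ℝ => h ^ (-α) * ∫ p in Ioo 0 L ×ˢ D,
        energyDensity h (Psih γ R₀ h) (vh16 (P 0) (P 1) P s₀ (h ^ β) h) p)
      (𝓝[>] 0) (𝓝 0) := by
  obtain ⟨K, hK⟩ := exists_eventually_setIntegral_energyDensity_vh16_le (s₀ := s₀) hγ hR₀ hR₀SO
    hD hDbdd (hPSO 0 (by simp)) (hPSO 1 (by simp)) hP hPSO
  refine squeeze_zero' ?_ ?_ (tendsto_rpow_neg_mul_sq_add_div_rpow hα hβ K)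
  · filter_upwards [self_mem_nhdsWithin] with h (hh : 0 < h)
    exact mul_nonneg (Real.rpow_nonneg hh.le _) (integral_nonneg fun _ => sq_nonneg _)
  · filter_upwards [self_mem_nhdsWithin, hK] with h (hh : 0 < h) hKh
    exact mul_le_mul_of_nonneg_left (hKh _ (Real.rpow_pos_of_pos hh β)) (Real.rpow_nonneg hh.le _)

theorem intermediate_scaling_transition_energy_vanishes
    (L : ℝ) (hL : 0 < L)
    (γ : ℝ → Fin 3 → ℝ) (hγ : ContDiff ℝ 2 γ)
    (harc : ∀ s ∈ Icc (0:ℝ) L, enorm3 (deriv γ s) = 1)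
    (hγinj : InjOn γ (Icc (0:ℝ) L))
    (R₀ : ℝ → M3) (hR₀C1 : ∀ i j, ContDiff ℝ 1 fun s => R₀ s i j)
    (hR₀SO : ∀ s ∈ Icc (0:ℝ) L, R₀ s ∈ SO3)
    (hR₀e1 : ∀ s ∈ Icc (0:ℝ) L, (R₀ s).mulVec (Pi.single 0 1) = deriv γ s)
    (Dset : Set (ℝ × ℝ)) (hDopen : IsOpen Dset) (hDconn : IsConnected Dset)
    (hDbdd : Bornology.IsBounded Dset) (hDvol : volume Dset = 1)
    (α β : ℝ) (hα : 0 ≤ α) (hα2 : α < 2) (hβ : 0 < β) (hβ2 : β < 2 - α)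
    (s₀ : ℝ) (hs₀ : s₀ ∈ Ioo (0:ℝ) L)
    (R₁ R₂ : M3) (hR₁ : R₁ ∈ SO3) (hR₂ : R₂ ∈ SO3)
    (P : ℝ → M3) (hPC1 : ∀ i j, ContDiff ℝ 1 fun t => P t i j)
    (hPSO : ∀ t ∈ Icc (0:ℝ) 1, P t ∈ SO3) (hP0 : P 0 = R₁) (hP1 : P 1 = R₂) :
    Filter.Tendsto
      (fun h : ℝ => h ^ (-α) *
        ∫ p in Ioo (0:ℝ) L ×ˢ Dset,
          distSO3 (scaledGrad h (vh16 R₁ R₂ P s₀ (h ^ β) h) p *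
            (scaledGrad h (Psih γ R₀ h) p)⁻¹) ^ 2)
      (nhdsWithin 0 (Ioi 0)) (nhds 0) := by
  subst hP0 hP1
  exact intermediate_scaling_transition_energy_vanishes_general
    (fun s hs => hR₀e1 s (Ioo_subset_Icc_self hs) ▸ (hγ.differentiable two_ne_zero s).hasDerivAt)
    hR₀C1 (fun s hs => hR₀SO s (Ioo_subset_Icc_self hs)) hDopen.measurableSet hDbdd hPC1 hPSO
    hα2 hβ2 s₀
end
end
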